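/- Suppose g : ℕ → ℂ is multiplicative and satisfies Condition (A) for some κ = ξ + iη with η² < 2ξ + 1, satisfies Condition (B), and satisfies Condition (C) with some β < ξ + 1. Then for all x ≥ 2 one has M_g(x) = c(g)·log^κ x + O_g((log x)^{β−1}), where c(g) = Γ(κ+1)^{−1} ∏_p (1 − 1/p)^κ (1 + g(p)/p + g(p²)/p² + ⋯), the product over primes converging. -/

import Mathlib

open Filter Finset
open scoped ENNReal NNReal

/-- `g` is multiplicative: `g 1 = 1` and `g (m*n) = g m * g n` for coprime `m, n`. -/
def IsMult (g : ℕ → ℂ) : Prop :=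
  g 1 = 1 ∧ ∀ m n : ℕ, Nat.Coprime m n → g (m * n) = g m * g n

/-- `M_g(x) = ∑_{n ≤ x} g(n)/n`. -/
noncomputable def Mg (g : ℕ → ℂ) (x : ℝ) : ℂ :=
  ∑ n ∈ Finset.Icc 1 ⌊x⌋₊, g n / (n : ℂ)

/-- The finite set of primes `p ≤ x`. -/
noncomputable def primesLE (x : ℝ) : Finset ℕ :=
  (Finset.range (⌊x⌋₊ + 1)).filter Nat.Prime

/-- Condition (A): `∑_{p ≤ x} g(p) log p / p = κ log x + O(1)` for all `x ≥ 2`. -/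
def CondA (g : ℕ → ℂ) (κ : ℂ) : Prop :=
  ∃ C : ℝ, ∀ x : ℝ, 2 ≤ x →
    ‖(∑ p ∈ primesLE x, g p * (Real.log p : ℂ) / (p : ℂ)) - κ * (Real.log x : ℂ)‖ ≤ C

/-- Condition (B):
`∑_p (|g(p)| log p / p) ∑_{r≥1} |g(p^r)|/p^r + ∑_p ∑_{r≥2} |g(p^r)| log(p^r)/p^r < ∞`. -/
def CondB (g : ℕ → ℂ) : Prop :=
  (∑' p : Nat.Primes,
      ((‖g (p : ℕ)‖₊ : ℝ≥0∞) * ENNReal.ofReal (Real.log (p : ℕ)) / ((p : ℕ) : ℝ≥0∞)) *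
        ∑' r : ℕ, (‖g ((p : ℕ) ^ (r + 1))‖₊ : ℝ≥0∞) / (((p : ℕ) ^ (r + 1) : ℕ) : ℝ≥0∞))
    + (∑' p : Nat.Primes, ∑' r : ℕ,
        (‖g ((p : ℕ) ^ (r + 2))‖₊ : ℝ≥0∞) *
          ENNReal.ofReal (Real.log ((p : ℕ) ^ (r + 2) : ℕ)) /
          (((p : ℕ) ^ (r + 2) : ℕ) : ℝ≥0∞)) < ⊤

/-- Condition (C): `∏_{p ≤ x} (1 + |g(p)|/p) ≪ (log x)^β` for all `x ≥ 2`. -/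
def CondC (g : ℕ → ℂ) (β : ℝ) : Prop :=
  ∃ C : ℝ, ∀ x : ℝ, 2 ≤ x →
    ∏ p ∈ primesLE x, (1 + ‖g p‖ / (p : ℝ)) ≤ C * Real.log x ^ β

/-- The Euler factor `(1 - 1/p)^κ (1 + g(p)/p + g(p²)/p² + ⋯)` (principal branch power). -/
noncomputable def eulerFactor (g : ℕ → ℂ) (κ : ℂ) (p : ℕ) : ℂ :=
  (1 - 1 / (p : ℂ)) ^ κ * ∑' r : ℕ, g (p ^ r) / (p : ℂ) ^ r


lemma mert_log_fact (N : ℕ) : Real.log (N.factorial : ℝ) =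
    ∑ p ∈ (range (N+1)).filter Nat.Prime, (N.factorial.factorization p : ℝ) * Real.log p := by
  rw [Real.log_nat_eq_sum_factorization, Finsupp.sum]
  apply Finset.sum_subset
  · intro p hp
    simp only [Nat.support_factorization, Nat.mem_primeFactors] at hp
    simp only [mem_filter, mem_range]
    exact ⟨Nat.lt_succ_of_le ((hp.1.dvd_factorial).1 hp.2.1), hp.1⟩
  · intro p _ hp
    simp only [Finsupp.mem_support_iff, not_not] at hp
    simp [hp]

lemma mert_lower {N p : ℕ} (hp : p.Prime) : (N : ℝ) / p - 1 ≤ (N.factorial.factorization p : ℝ) := by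
  have h1 : N / p ≤ N.factorial.factorization p := by
    have h2 : p ^ (N / p) ∣ N.factorial := by
      have h3 : (p * (N / p)).factorial ∣ N.factorial := Nat.factorial_dvd_factorial (Nat.mul_div_le N p)
      refine dvd_trans ?_ h3
      have := Nat.factorization_factorial_mul hp (n := N / p)
      rw [hp.pow_dvd_iff_le_factorization (Nat.factorial_ne_zero _)]
      rw [this]; omega
    exact (hp.pow_dvd_iff_le_factorization (Nat.factorial_ne_zero _)).1 h2
  have h4 : (N : ℝ) / p < (N / p : ℕ) + 1 := by
    rw [div_lt_iff₀ (by exact_mod_cast hp.pos)]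
    have := Nat.lt_div_mul_add hp.pos (a := N)
    have h5 : N < (N / p + 1) * p := by nlinarith
    exact_mod_cast h5
  have : ((N / p : ℕ) : ℝ) ≤ (N.factorial.factorization p : ℝ) := by exact_mod_cast h1
  linarith

lemma mert_upper {N p : ℕ} (hp : p.Prime) : (N.factorial.factorization p : ℝ) ≤ (N : ℝ) / (p - 1) := by
  have := Fact.mk hp
  have h := sub_one_mul_padicValNat_factorial (p := p) N
  rw [← Nat.factorization_def _ hp] at h
  have h1 : (p - 1) * N.factorial.factorization p ≤ N := by rw [h]; omega
  have h2 : (1:ℝ) < p := by exact_mod_cast hp.one_lt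
  rw [le_div_iff₀ (by linarith)]
  have h3 : (((p - 1) * N.factorial.factorization p : ℕ) : ℝ) ≤ N := by exact_mod_cast h1
  push_cast [Nat.cast_sub hp.one_lt.le] at h3
  linarith

lemma mert_aux_summable : Summable (fun n : ℕ => 4 * (n : ℝ) ^ (-(3/2) : ℝ)) :=
  (Real.summable_nat_rpow.2 (by norm_num)).mul_left 4

lemma mert_term {n : ℕ} (hn : 2 ≤ n) : Real.log n / (n - 1) ≤ Real.log n / n + 4 * (n : ℝ) ^ (-(3/2) : ℝ) := by
  have h2 : (2:ℝ) ≤ n := by exact_mod_cast hn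
  have hl : Real.log n ≤ 2 * (n:ℝ) ^ (1/2 : ℝ) := by
    have := Real.log_le_rpow_div (x := n) (by positivity) (ε := 1/2) (by norm_num)
    linarith
  have e : Real.log n / (n - 1) - Real.log n / n = Real.log n / (n * (n-1)) := by
    have : (n:ℝ) - 1 ≠ 0 := by linarith
    have : (n:ℝ) ≠ 0 := by linarith
    field_simp
    ring
  have h3 : Real.log n / (n * (n-1)) ≤ (2 * (n:ℝ) ^ (1/2 : ℝ)) / ((n:ℝ)^2/2) := by
    apply div_le_div₀ (by positivity) hl (by positivity)
    nlinarith
  have h4 : (2 * (n:ℝ) ^ (1/2 : ℝ)) / ((n:ℝ)^2/2) = 4 * (n : ℝ) ^ (-(3/2) : ℝ) := by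
    have : (n : ℝ) ^ (-(3/2) : ℝ) = (n:ℝ)^(1/2:ℝ) / (n:ℝ)^(2:ℝ) := by
      rw [← Real.rpow_sub (by linarith)]; norm_num
    rw [this, Real.rpow_two]; field_simp; norm_num
  linarith

lemma mert_theta (N : ℕ) : ∑ p ∈ (range (N+1)).filter Nat.Prime, Real.log p ≤ Real.log 4 * N := by
  have := Chebyshev.theta_le_log4_mul_x (x := N) (by positivity)
  rw [Chebyshev.theta_eq_sum_Icc] at this
  refine le_trans (le_of_eq ?_) this
  apply Finset.sum_congr _ (fun _ _ => rfl)
  ext p; simp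

theorem mertens_one : ∃ C : ℝ, ∀ N : ℕ, 1 ≤ N →
    |∑ p ∈ (range (N+1)).filter Nat.Prime, Real.log p / p - Real.log N| ≤ C := by
  set K := ∑' n : ℕ, 4 * (n : ℝ) ^ (-(3/2) : ℝ) with hK
  refine ⟨Real.log 4 + 1 + K, fun N hN => ?_⟩
  have hN0 : (0:ℝ) < N := by exact_mod_cast hN
  have hK0 : 0 ≤ K := tsum_nonneg fun n => by positivity
  set S := ∑ p ∈ (range (N+1)).filter Nat.Prime, Real.log p / p with hS
  have hlog4 : 0 ≤ Real.log 4 := Real.log_nonneg (by norm_num)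
  have key := mert_log_fact N
  have up : Real.log (N.factorial : ℝ) ≤ N * (S + K) := by
    rw [key]
    calc _ ≤ ∑ p ∈ (range (N+1)).filter Nat.Prime, ((N:ℝ) * (Real.log p / p) + N * (4 * (p : ℝ) ^ (-(3/2) : ℝ))) := by
          apply Finset.sum_le_sum
          intro p hp
          have hp' := (mem_filter.1 hp).2
          have h1 := mert_upper (N := N) hp'
          have h2 := mert_term hp'.two_le
          have h3 : 0 ≤ Real.log p := Real.log_natCast_nonneg p
          calc _ ≤ (N:ℝ)/(p-1) * Real.log p := by gcongr
            _ = N * (Real.log p / (p-1)) := by ring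
            _ ≤ N * (Real.log p / p + 4 * (p : ℝ) ^ (-(3/2) : ℝ)) := by gcongr
            _ = _ := by ring
      _ = N * S + N * ∑ p ∈ (range (N+1)).filter Nat.Prime, (4 * (p : ℝ) ^ (-(3/2) : ℝ)) := by
          rw [Finset.sum_add_distrib, ← Finset.mul_sum, ← Finset.mul_sum]
      _ ≤ _ := by
          rw [mul_add]
          gcongr
          exact mert_aux_summable.sum_le_tsum _ (fun n _ => by positivity)
  have lo : N * S - Real.log 4 * N ≤ Real.log (N.factorial : ℝ) := by
    rw [key]
    calc _ ≤ N * S - ∑ p ∈ (range (N+1)).filter Nat.Prime, Real.log p := by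
            linarith [mert_theta N]
      _ = ∑ p ∈ (range (N+1)).filter Nat.Prime, ((N:ℝ) / p - 1) * Real.log p := by
          rw [hS, Finset.mul_sum, ← Finset.sum_sub_distrib]
          apply Finset.sum_congr rfl; intros; ring
      _ ≤ _ := by
          apply Finset.sum_le_sum
          intro p hp
          have h3 : 0 ≤ Real.log p := Real.log_natCast_nonneg p
          have := mert_lower (N := N) (mem_filter.1 hp).2
          gcongr
  have f1 : Real.log (N.factorial : ℝ) ≤ N * Real.log N := by
    rw [← Real.log_pow]
    apply Real.log_le_log (by exact_mod_cast Nat.factorial_pos N)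
    exact_mod_cast Nat.factorial_le_pow N
  have f2 : N * Real.log N - N ≤ Real.log (N.factorial : ℝ) := by
    have h1 : (N:ℝ)^N / N.factorial ≤ Real.exp N := by
      exact Real.pow_div_factorial_le_exp (N:ℝ) hN0.le N
    have hf : (0:ℝ) < N.factorial := by exact_mod_cast Nat.factorial_pos N
    have h2 := Real.log_le_log (by positivity) h1
    rw [Real.log_exp, Real.log_div (by positivity) hf.ne', Real.log_pow] at h2
    linarith
  rw [abs_le]
  constructor
  · have : N * (Real.log N - 1) ≤ N * (S + K) := by linarith
    have := le_of_mul_le_mul_left this hN0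
    linarith
  · have : N * (S - Real.log 4) ≤ N * Real.log N := by linarith
    have := le_of_mul_le_mul_left this hN0
    linarith

/-- Abel summation with rate. -/
lemma abel_tail (w : ℕ → ℝ) (b : ℕ → ℂ) (C : ℝ) (M : ℕ)
    (hw0 : ∀ n, M ≤ n → 0 ≤ w n) (hw : ∀ n, M ≤ n → w (n+1) ≤ w n)
    (hb : ∀ n, ‖∑ k ∈ range n, b k‖ ≤ C) (N : ℕ) (hN : M ≤ N) :
    ‖∑ n ∈ Ico M N, (w n : ℂ) * b n‖ ≤ 2 * C * w M := by
  have hd : ∀ n, ‖∑ k ∈ range n, b k - ∑ k ∈ range M, b k‖ ≤ 2 * C := fun n =>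
    (norm_sub_le _ _).trans (by linarith [hb n, hb M])
  have key : ‖∑ n ∈ Ico M N, (w n : ℂ) * b n - (w N : ℂ) * (∑ k ∈ range N, b k - ∑ k ∈ range M, b k)‖
      ≤ 2 * C * (w M - w N) := by
    induction N, hN using Nat.le_induction with
    | base => simp
    | succ n hn ih =>
      rw [Finset.sum_Ico_succ_top hn, Finset.sum_range_succ]
      have e : (∑ k ∈ Ico M n, (w k : ℂ) * b k + w n * b n) - (w (n+1) : ℂ) * (∑ k ∈ range n, b k + b n - ∑ k ∈ range M, b k)
        = (∑ k ∈ Ico M n, (w k : ℂ) * b k - (w n : ℂ) * (∑ k ∈ range n, b k - ∑ k ∈ range M, b k))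
          + ((w n - w (n+1) : ℝ) : ℂ) * (∑ k ∈ range (n+1), b k - ∑ k ∈ range M, b k) := by
        rw [Finset.sum_range_succ]; push_cast; ring
      rw [e]
      refine (norm_add_le _ _).trans ?_
      rw [norm_mul, Complex.norm_real, Real.norm_of_nonneg (by linarith [hw n hn])]
      have := mul_le_mul_of_nonneg_left (hd (n+1)) (show 0 ≤ w n - w (n+1) by linarith [hw n hn])
      linarith
  have h2 : ‖(w N : ℂ) * (∑ k ∈ range N, b k - ∑ k ∈ range M, b k)‖ ≤ 2 * C * w N := by
    rw [norm_mul, Complex.norm_real, Real.norm_of_nonneg (hw0 N hN)]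
    have := mul_le_mul_of_nonneg_left (hd N) (hw0 N hN)
    linarith
  have h3 := norm_add_le (∑ n ∈ Ico M N, (w n : ℂ) * b n - (w N : ℂ) * (∑ k ∈ range N, b k - ∑ k ∈ range M, b k)) ((w N : ℂ) * (∑ k ∈ range N, b k - ∑ k ∈ range M, b k))
  rw [sub_add_cancel] at h3
  linarith

/-- If the sums of `a n log n` are bounded then `∑ a n` converges with rate `1/log`. -/
lemma abel_conv (a : ℕ → ℂ) (C : ℝ)
    (hb : ∀ n, ‖∑ k ∈ range n, a k * (Real.log k : ℂ)‖ ≤ C) :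
    ∃ G : ℂ, Tendsto (fun N => ∑ k ∈ range N, a k) atTop (nhds G) ∧
      ∀ M : ℕ, 2 ≤ M → ‖∑ k ∈ range M, a k - G‖ ≤ 2 * C * (Real.log M)⁻¹ := by
  have htail : ∀ M N : ℕ, 2 ≤ M → M ≤ N →
      ‖∑ k ∈ range N, a k - ∑ k ∈ range M, a k‖ ≤ 2 * C * (Real.log M)⁻¹ := by
    intro M N hM hN
    have := abel_tail (fun n => (Real.log n)⁻¹) (fun k => a k * (Real.log k : ℂ)) C M
      (fun n hn => inv_nonneg.2 (Real.log_natCast_nonneg n))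
      (fun n hn => by
        have : (1:ℝ) < n := by exact_mod_cast (by omega : 1 < n)
        apply inv_anti₀ (Real.log_pos this)
        apply Real.log_le_log (by linarith); push_cast; linarith) hb N hN
    rw [← Finset.sum_Ico_eq_sub _ hN]
    refine le_trans (le_of_eq ?_) this
    congr 1
    apply Finset.sum_congr rfl
    intro n hn
    have : (1:ℝ) < n := by exact_mod_cast (by have := (mem_Ico.1 hn).1; omega : 1 < n)
    have h := (Real.log_pos this).ne'
    have h' : (Real.log n : ℂ) ≠ 0 := by exact_mod_cast h
    rw [Complex.ofReal_inv]
    field_simp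
  have hlim : Tendsto (fun M : ℕ => 2 * C * (Real.log M)⁻¹) atTop (nhds 0) := by
    have := (Real.tendsto_log_atTop.comp tendsto_natCast_atTop_atTop).inv_tendsto_atTop.const_mul (2 * C)
    simpa using this
  have hC : CauchySeq (fun N => ∑ k ∈ range N, a k) := by
    rw [Metric.cauchySeq_iff']
    intro ε hε
    obtain ⟨M, hM, hM2⟩ := ((hlim.eventually_lt_const hε).and (eventually_ge_atTop 2)).exists
    exact ⟨M, fun n hn => by rw [dist_eq_norm]; exact (htail M n hM2 hn).trans_lt hM⟩
  obtain ⟨G, hG⟩ := cauchySeq_tendsto_of_complete hC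
  refine ⟨G, hG, fun M hM => ?_⟩
  rw [norm_sub_rev]
  refine le_of_tendsto ((hG.sub_const (∑ k ∈ range M, a k)).norm) ?_
  filter_upwards [eventually_ge_atTop M] with N hN using htail M N hM hN

noncomputable def odeM (f : ℕ → ℂ) (t : ℝ) : ℂ := ∑ n ∈ Icc 1 ⌊Real.exp t⌋₊, f n
noncomputable def odeF (f : ℕ → ℂ) (t : ℝ) : ℂ :=
  ∑ n ∈ Icc 1 ⌊Real.exp t⌋₊, f n * ((t - Real.log n : ℝ) : ℂ)

lemma odeF_deriv (f : ℕ → ℂ) (t : ℝ) : HasDerivWithinAt (odeF f) (odeM f t) (Set.Ici t) t := by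
  have h1 : HasDerivAt (fun u : ℝ => ∑ n ∈ Icc 1 ⌊Real.exp t⌋₊, f n * ((u - Real.log n : ℝ) : ℂ))
      (∑ n ∈ Icc 1 ⌊Real.exp t⌋₊, f n) t := by
    apply HasDerivAt.fun_sum
    intro n _
    have := (((hasDerivAt_id t).sub_const (Real.log n)).ofReal_comp).const_mul (f n)
    simpa using this
  refine h1.hasDerivWithinAt.congr_of_eventuallyEq ?_ rfl
  have h2 : ∀ᶠ u in nhds t, Real.exp u < ⌊Real.exp t⌋₊ + 1 :=
    Real.continuous_exp.continuousAt.eventually_lt_const (Nat.lt_floor_add_one _)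
  filter_upwards [nhdsWithin_le_nhds h2, self_mem_nhdsWithin] with u hu hu2
  have : ⌊Real.exp u⌋₊ = ⌊Real.exp t⌋₊ := by
    rw [Nat.floor_eq_iff (Real.exp_pos u).le]
    exact ⟨(Nat.floor_le (Real.exp_pos t).le).trans (Real.exp_le_exp.2 hu2), hu⟩
  unfold odeF
  rw [this]

lemma odeF_cont (f : ℕ → ℂ) (a b : ℝ) : ContinuousOn (odeF f) (Set.Icc a b) := by
  have h : Continuous (fun u : ℝ => ∑ n ∈ Icc 1 ⌊Real.exp b⌋₊, f n * ((max (u - Real.log n) 0 : ℝ) : ℂ)) := by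
    fun_prop
  refine h.continuousOn.congr ?_
  intro u hu
  unfold odeF
  beta_reduce
  have hle : ⌊Real.exp u⌋₊ ≤ ⌊Real.exp b⌋₊ := Nat.floor_mono (Real.exp_le_exp.2 hu.2)
  rw [← Finset.sum_subset (Finset.Icc_subset_Icc_right hle)]
  · apply Finset.sum_congr rfl
    intro n hn
    obtain ⟨h1, h2⟩ := mem_Icc.1 hn
    rw [max_eq_left]
    have h3 : (n:ℝ) ≤ Real.exp u := (Nat.le_floor_iff (Real.exp_pos u).le).1 h2
    have h4 : (0:ℝ) < n := by exact_mod_cast h1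
    have := (Real.log_le_iff_le_exp h4).2 h3
    linarith
  · intro n hn hn2
    obtain ⟨h1, h2⟩ := mem_Icc.1 hn
    have h4 : (0:ℝ) < n := by exact_mod_cast h1
    have h3 : ⌊Real.exp u⌋₊ < n := by
      by_contra hc
      exact hn2 (mem_Icc.2 ⟨h1, by omega⟩)
    have h5 := (Nat.floor_lt (Real.exp_pos u).le).1 h3
    have := (Real.lt_log_iff_exp_lt h4).2 h5
    rw [max_eq_right (by linarith)]; simp

theorem ode_main (f : ℕ → ℂ) (κ : ℂ) (β C : ℝ) (hβ : β < κ.re + 1)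
    (h : ∀ t : ℝ, Real.log 2 ≤ t →
      ‖(t : ℂ) * odeM f t - (κ + 1) * odeF f t‖ ≤ C * t ^ β) :
    ∃ c : ℂ, ∃ C' : ℝ, ∀ t : ℝ, Real.log 2 ≤ t →
      ‖odeM f t - c * (t : ℂ) ^ κ‖ ≤ C' * t ^ (β - 1) := by
  have hl2 : 0 < Real.log 2 := Real.log_pos (by norm_num)
  set d := κ.re + 1 - β with hd
  have hd0 : 0 < d := by linarith
  set H : ℝ → ℂ := fun t => odeF f t * (t : ℂ) ^ (-(κ + 1)) with hH
  have hHd : ∀ t : ℝ, Real.log 2 ≤ t → HasDerivWithinAt H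
      (((t : ℂ) * odeM f t - (κ + 1) * odeF f t) * (t : ℂ) ^ (-(κ + 1) - 1)) (Set.Ici t) t := by
    intro t ht
    have ht0 : 0 < t := by linarith
    have ht0' : (t : ℂ) ≠ 0 := by exact_mod_cast ht0.ne'
    have h1 : HasDerivAt (fun u : ℝ => (u : ℂ) ^ (-(κ + 1))) (-(κ + 1) * (t : ℂ) ^ (-(κ + 1) - 1)) t := by
      have := (((hasDerivAt_id (t : ℂ)).cpow_const (c := -(κ + 1)) (by simp [ht0])).comp_ofReal)
      simpa using this
    have h2 := (odeF_deriv f t).mul h1.hasDerivWithinAt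
    refine h2.congr_deriv ?_
    rw [Complex.cpow_sub _ _ ht0', Complex.cpow_one]
    field_simp
    ring
  have hHb : ∀ a b : ℝ, Real.log 2 ≤ a → a ≤ b → ‖H b - H a‖ ≤ C / d * a ^ (-d) - C / d * b ^ (-d) := by
    intro a b ha hab
    have ha0 : 0 < a := by linarith
    have := image_norm_le_of_norm_deriv_right_le_deriv_boundary' (f := fun t => H t - H a) (a := a) (b := b)
      (f' := fun t => (((t : ℂ) * odeM f t - (κ + 1) * odeF f t) * (t : ℂ) ^ (-(κ + 1) - 1)))
      (B := fun t => C / d * a ^ (-d) - C / d * t ^ (-d)) (B' := fun t => C * t ^ (-d - 1))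
      ?_ ?_ ?_ ?_ ?_ ?_ (Set.right_mem_Icc.2 hab)
    · simpa using this
    · refine ((odeF_cont f a b).mul ?_).sub continuousOn_const
      intro t ht
      have ht0 : 0 < t := by linarith [ht.1]
      refine ContinuousAt.continuousWithinAt ?_
      have := Complex.continuousAt_ofReal_cpow_const t (-(κ+1)) (Or.inr ht0.ne')
      exact this
    · intro t ht
      exact (hHd t (ha.trans ht.1)).sub_const _
    · simp
    · intro t ht
      have ht0 : 0 < t := by linarith [ht.1]
      exact (continuousAt_const.sub (continuousAt_const.mul
        (Real.continuousAt_rpow_const t _ (Or.inl ht0.ne')))).continuousWithinAt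
    · intro t ht
      have ht0 : 0 < t := by linarith [ht.1]
      have h1 := ((Real.hasDerivAt_rpow_const (p := -d) (Or.inl ht0.ne')).const_mul (C / d)).const_sub (C / d * a ^ (-d))
      refine (h1.congr_deriv ?_).hasDerivWithinAt
      field_simp
    · intro t ht
      have ht0 : 0 < t := by linarith [ht.1]
      rw [norm_mul, Complex.norm_cpow_eq_rpow_re_of_pos ht0]
      refine (mul_le_mul_of_nonneg_right (h t (ha.trans ht.1)) (by positivity)).trans (le_of_eq ?_)
      rw [mul_assoc, ← Real.rpow_add ht0]
      congr 2
      simp [hd]; ring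
  have hC0 : 0 ≤ C := by
    have := (norm_nonneg _).trans (h (Real.log 2) le_rfl)
    have h2 : 0 < Real.log 2 ^ β := by positivity
    by_contra hc
    nlinarith
  have hHb' : ∀ a b : ℝ, Real.log 2 ≤ a → a ≤ b → ‖H b - H a‖ ≤ C / d * a ^ (-d) := by
    intro a b ha hab
    have hb0 : 0 < b := by linarith
    have : 0 ≤ C / d * b ^ (-d) := by positivity
    linarith [hHb a b ha hab]
  have hlim : Tendsto (fun t : ℝ => C / d * t ^ (-d)) atTop (nhds 0) := by
    simpa using (tendsto_rpow_neg_atTop hd0).const_mul (C / d)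
  have hcau : CauchySeq H := by
    rw [Metric.cauchySeq_iff']
    intro ε hε
    obtain ⟨M, hM, hM2⟩ := ((hlim.eventually_lt_const hε).and (eventually_ge_atTop (Real.log 2))).exists
    exact ⟨M, fun n hn => by rw [dist_eq_norm]; exact (hHb' M n hM2 hn).trans_lt hM⟩
  obtain ⟨c', hc'⟩ := cauchySeq_tendsto_of_complete hcau
  have hrate : ∀ t : ℝ, Real.log 2 ≤ t → ‖H t - c'‖ ≤ C / d * t ^ (-d) := by
    intro t ht
    rw [norm_sub_rev]
    refine le_of_tendsto ((hc'.sub_const (H t)).norm) ?_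
    filter_upwards [eventually_ge_atTop t] with N hN using hHb' t N ht hN
  refine ⟨(κ + 1) * c', C + ‖κ + 1‖ * (C / d), fun t ht => ?_⟩
  have ht0 : 0 < t := by linarith
  have ht0' : (t : ℂ) ≠ 0 := by exact_mod_cast ht0.ne'
  have hF : odeF f t = H t * (t : ℂ) ^ (κ + 1) := by
    rw [hH]; simp only
    rw [mul_assoc, ← Complex.cpow_add _ _ ht0']; simp
  have e : odeM f t - (κ + 1) * c' * (t : ℂ) ^ κ =
      (((t : ℂ) * odeM f t - (κ + 1) * odeF f t) + (κ + 1) * ((H t - c') * (t : ℂ) ^ (κ + 1))) * (t : ℂ)⁻¹ := by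
    rw [hF, Complex.cpow_add _ _ ht0', Complex.cpow_one]
    field_simp
    ring
  rw [e, norm_mul, norm_inv, Complex.norm_real, Real.norm_of_nonneg ht0.le]
  have h1 : ‖(κ + 1) * ((H t - c') * (t : ℂ) ^ (κ + 1))‖ ≤ ‖κ + 1‖ * (C / d) * t ^ β := by
    rw [norm_mul, norm_mul, Complex.norm_cpow_eq_rpow_re_of_pos ht0, mul_assoc ‖κ + 1‖]
    refine mul_le_mul_of_nonneg_left ?_ (norm_nonneg _)
    refine (mul_le_mul_of_nonneg_right (hrate t ht) (by positivity)).trans (le_of_eq ?_)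
    rw [mul_assoc, ← Real.rpow_add ht0]
    congr 2
    simp [hd]
  have h2 := (norm_add_le _ _).trans (add_le_add (h t ht) h1)
  rw [Real.rpow_sub ht0, Real.rpow_one, div_eq_mul_inv (t ^ β), ← mul_assoc (C + _)]
  refine mul_le_mul_of_nonneg_right ?_ (inv_nonneg.2 ht0.le)
  linarith
open MeasureTheory in
lemma lap_int_exp {s : ℝ} (hs : 0 < s) {n : ℕ} (hn : 1 ≤ n) :
    IntegrableOn (fun t => if Real.log n ≤ t then s * Real.exp (-s * t) else 0) (Set.Ioi 0) ∧
    ∫ t in Set.Ioi (0:ℝ), (if Real.log n ≤ t then s * Real.exp (-s * t) else 0) = (n:ℝ) ^ (-s) := by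
  have hl : 0 ≤ Real.log n := Real.log_natCast_nonneg n
  have hi : IntegrableOn (fun t => s * Real.exp (-s * t)) (Set.Ioi (Real.log n)) :=
    (integrableOn_exp_mul_Ioi (by linarith : -s < 0) _).const_mul s
  have he : (fun t => if Real.log n ≤ t then s * Real.exp (-s * t) else 0) =
      Set.indicator (Set.Ici (Real.log n)) (fun t => s * Real.exp (-s * t)) := by
    ext t; simp [Set.indicator]
  have hi2 : IntegrableOn (fun t => s * Real.exp (-s * t)) (Set.Ici (Real.log n)) :=
    (integrableOn_Ici_iff_integrableOn_Ioi).2 hi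
  rw [he]
  constructor
  · exact (integrable_indicator_iff measurableSet_Ici).2 hi2 |>.integrableOn
  · rw [setIntegral_indicator measurableSet_Ici]
    have hae : (Set.Ioi (0:ℝ) ∩ Set.Ici (Real.log n) : Set ℝ) =ᵐ[volume] Set.Ioi (Real.log n) := by
      have h1 : (Set.Ioi (0:ℝ) : Set ℝ) =ᵐ[volume] Set.Ici (0:ℝ) := Ioi_ae_eq_Ici
      have h2 := h1.inter (ae_eq_refl (Set.Ici (Real.log n)))
      refine h2.trans ?_
      rw [Set.inter_eq_right.2 (Set.Ici_subset_Ici.2 hl)]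
      exact Ioi_ae_eq_Ici.symm
    rw [setIntegral_congr_set hae, integral_const_mul, integral_exp_mul_Ioi (by linarith)]
    rw [Real.rpow_def_of_pos (by exact_mod_cast hn)]
    field_simp

open MeasureTheory in
lemma lap_rep (a : ℕ → ℂ) (h0 : a 0 = 0) {s : ℝ} (hs : 0 < s)
    (hsum : Summable fun n : ℕ => ‖a n‖ * (n:ℝ) ^ (-s)) :
    ∑' n : ℕ, a n * (((n:ℝ) ^ (-s) : ℝ) : ℂ) =
      s * ∫ t in Set.Ioi (0:ℝ), odeM a t * (Real.exp (-s * t) : ℂ) := by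
  set φ : ℕ → ℝ → ℝ := fun n t => if Real.log n ≤ t then s * Real.exp (-s * t) else 0 with hφ
  have hintegr : ∀ n, Integrable (fun t => a n * (φ n t : ℂ)) (volume.restrict (Set.Ioi (0:ℝ))) := by
    intro n
    rcases Nat.eq_zero_or_pos n with rfl | hn
    · simp [h0]
    · exact ((lap_int_exp hs hn).1.ofReal).const_mul _
  have hval : ∀ n, ∫ t in Set.Ioi (0:ℝ), a n * (φ n t : ℂ) = a n * (((n:ℝ) ^ (-s) : ℝ) : ℂ) := by
    intro n
    rcases Nat.eq_zero_or_pos n with rfl | hn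
    · simp [h0]
    · have h1 : ∫ t in Set.Ioi (0:ℝ), (φ n t : ℂ) = ((∫ t in Set.Ioi (0:ℝ), φ n t : ℝ) : ℂ) := integral_ofReal
      rw [integral_const_mul, h1, (lap_int_exp hs hn).2]
  have hnorm : ∀ n, ∫ t in Set.Ioi (0:ℝ), ‖a n * (φ n t : ℂ)‖ = ‖a n‖ * (n:ℝ) ^ (-s) := by
    intro n
    rcases Nat.eq_zero_or_pos n with rfl | hn
    · simp [h0]
    · rw [← (lap_int_exp hs hn).2, ← integral_const_mul]
      congr 1; ext t
      rw [norm_mul, Complex.norm_real, Real.norm_of_nonneg]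
      simp only [hφ]; split_ifs
      · positivity
      · exact le_rfl
  have := hasSum_integral_of_summable_integral_norm hintegr (by simpa only [hnorm] using hsum)
  simp only [hval] at this
  rw [this.tsum_eq, ← integral_const_mul]
  apply setIntegral_congr_fun measurableSet_Ioi
  intro t ht
  beta_reduce
  rw [tsum_eq_sum (s := Icc 1 ⌊Real.exp t⌋₊)]
  · unfold odeM
    rw [Finset.sum_mul, Finset.mul_sum]
    apply Finset.sum_congr rfl
    intro n hn
    obtain ⟨h1, h2⟩ := mem_Icc.1 hn
    have h4 : (0:ℝ) < n := by exact_mod_cast h1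
    have h3 := (Real.log_le_iff_le_exp h4).2 ((Nat.le_floor_iff (Real.exp_pos t).le).1 h2)
    simp only [hφ, if_pos h3]
    push_cast; ring
  · intro n hn
    rcases Nat.eq_zero_or_pos n with rfl | hn1
    · simp [h0]
    · have h4 : (0:ℝ) < n := by exact_mod_cast hn1
      have h3 : ⌊Real.exp t⌋₊ < n := by
        by_contra hc
        exact hn (mem_Icc.2 ⟨hn1, by omega⟩)
      have h5 := (Real.lt_log_iff_exp_lt h4).2 ((Nat.floor_lt (Real.exp_pos t).le).1 h3)
      simp only [hφ, if_neg (not_le.2 h5)]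
      simp

open MeasureTheory in
lemma lap_gam_int {b s : ℝ} (hb : -1 < b) (hs : 0 < s) :
    IntegrableOn (fun t => t ^ b * Real.exp (-s * t)) (Set.Ioi 0) := by
  simpa using integrableOn_rpow_mul_exp_neg_mul_rpow (p := 1) hb one_pos hs

open MeasureTheory in
lemma lap_gam_val {b s : ℝ} (hb : -1 < b) (hs : 0 < s) :
    ∫ t in Set.Ioi (0:ℝ), t ^ b * Real.exp (-s * t) = s ^ (-(b+1)) * Real.Gamma (b+1) := by
  have := Real.integral_rpow_mul_exp_neg_mul_Ioi (a := b + 1) (by linarith) hs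
  rw [one_div, Real.inv_rpow hs.le, ← Real.rpow_neg hs.le] at this
  simpa using this

lemma odeM_meas (a : ℕ → ℂ) : Measurable (odeM a) := by
  have : Measurable (fun N : ℕ => ∑ n ∈ Icc 1 N, a n) := measurable_from_nat
  exact this.comp (Nat.measurable_floor.comp Real.measurable_exp)

open MeasureTheory in
theorem laplace_limit (a : ℕ → ℂ) (h0 : a 0 = 0) (κ c : ℂ) (β C : ℝ) (hξ : -1 < κ.re) (hβ0 : 0 < β)
    (hβ : β < κ.re + 1)
    (hsum : ∀ s : ℝ, 0 < s → Summable fun n : ℕ => ‖a n‖ * (n:ℝ) ^ (-s))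
    (h : ∀ t : ℝ, Real.log 2 ≤ t → ‖odeM a t - c * (t : ℂ) ^ κ‖ ≤ C * t ^ (β - 1)) :
    Tendsto (fun s : ℝ => (s : ℂ) ^ κ * ∑' n : ℕ, a n * (((n:ℝ) ^ (-s) : ℝ) : ℂ))
      (nhdsWithin 0 (Set.Ioi 0)) (nhds (c * Complex.Gamma (κ + 1))) := by
  set b₁ := β - 1 with hb₁
  set b₂ := min 0 ((κ.re - 1) / 2) with hb₂
  have hb1 : -1 < b₁ := by linarith
  have hb1' : b₁ < κ.re := by linarith
  have hb2 : -1 < b₂ := lt_min (by linarith) (by linarith)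
  have hb2' : b₂ < κ.re := (min_le_right _ _).trans_lt (by linarith)
  have hb20 : b₂ ≤ 0 := min_le_left _ _
  set K := |C| + ‖a 1‖ + ‖c‖ with hK
  have hK0 : 0 ≤ K := by positivity
  have hl2 : 0 < Real.log 2 := Real.log_pos (by norm_num)
  have hl2' : Real.log 2 < 1 := by linarith [Real.log_two_lt_d9]
  have hbd : ∀ t : ℝ, 0 < t → ‖odeM a t - c * (t : ℂ) ^ κ‖ ≤ K * (t ^ b₁ + t ^ b₂) := by
    intro t ht
    have p1 : 0 < t ^ b₁ := by positivity
    have p2 : 0 < t ^ b₂ := by positivity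
    have na := norm_nonneg (a 1)
    have nc := norm_nonneg c
    by_cases htl : Real.log 2 ≤ t
    · refine (h t htl).trans ?_
      have : C ≤ |C| := le_abs_self C
      have : 0 ≤ |C| := abs_nonneg C
      have : C * t ^ b₁ ≤ K * t ^ b₁ := by gcongr; linarith
      nlinarith [mul_nonneg hK0 p2.le]
    · push Not at htl
      have ht1 : t < 1 := by linarith
      have hfl : ⌊Real.exp t⌋₊ = 1 := by
        rw [Nat.floor_eq_iff (Real.exp_pos t).le]
        constructor
        · simpa using ht.le
        · have := (Real.lt_log_iff_exp_lt (by norm_num : (0:ℝ) < 2)).1 htl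
          norm_num; linarith
      have hM : odeM a t = a 1 := by unfold odeM; rw [hfl]; simp
      rw [hM]
      refine (norm_sub_le _ _).trans ?_
      rw [norm_mul, Complex.norm_cpow_eq_rpow_re_of_pos ht]
      have q1 : 1 ≤ t ^ b₂ := Real.one_le_rpow_of_pos_of_le_one_of_nonpos ht ht1.le hb20
      have q2 : t ^ κ.re ≤ t ^ b₂ := Real.rpow_le_rpow_of_exponent_ge ht ht1.le hb2'.le
      have : ‖a 1‖ + ‖c‖ * t ^ κ.re ≤ (‖a 1‖ + ‖c‖) * t ^ b₂ := by nlinarith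
      have : (‖a 1‖ + ‖c‖) * t ^ b₂ ≤ K * t ^ b₂ := by
        have : 0 ≤ |C| := abs_nonneg C
        gcongr; linarith
      nlinarith [mul_nonneg hK0 p1.le]
  have hbi : ∀ s : ℝ, 0 < s → IntegrableOn (fun t => K * (t ^ b₁ + t ^ b₂) * Real.exp (-s * t)) (Set.Ioi 0) := by
    intro s hs
    have := ((lap_gam_int hb1 hs).add (lap_gam_int hb2 hs)).const_mul K
    refine this.congr (Eventually.of_forall fun t => ?_)
    simp only [Pi.add_apply]; ring
  have hEm : Measurable (fun t : ℝ => odeM a t - c * (t : ℂ) ^ κ) :=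
    (odeM_meas a).sub (measurable_const.mul (Complex.measurable_ofReal.pow_const κ))
  have hEb : ∀ s t : ℝ, 0 < t → ‖(odeM a t - c * (t : ℂ) ^ κ) * (Real.exp (-s * t) : ℂ)‖ ≤
      K * (t ^ b₁ + t ^ b₂) * Real.exp (-s * t) := by
    intro s t ht
    rw [norm_mul, Complex.norm_real, Real.norm_of_nonneg (Real.exp_pos _).le]
    exact mul_le_mul_of_nonneg_right (hbd t ht) (Real.exp_pos _).le
  have hEi : ∀ s : ℝ, 0 < s → IntegrableOn (fun t : ℝ => (odeM a t - c * (t : ℂ) ^ κ) * (Real.exp (-s * t) : ℂ)) (Set.Ioi 0) := by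
    intro s hs
    refine Integrable.mono' (hbi s hs) ?_ ?_
    · exact (hEm.mul (Complex.measurable_ofReal.comp (by fun_prop))).aestronglyMeasurable
    · filter_upwards [ae_restrict_mem measurableSet_Ioi] with t ht using hEb s t ht
  have hmi : ∀ s : ℝ, 0 < s → IntegrableOn (fun t : ℝ => (t : ℂ) ^ κ * (Real.exp (-s * t) : ℂ)) (Set.Ioi 0) := by
    intro s hs
    refine Integrable.mono' (lap_gam_int hξ hs) ?_ ?_
    · exact ((Complex.measurable_ofReal.pow_const κ).mul
        (Complex.measurable_ofReal.comp (by fun_prop))).aestronglyMeasurable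
    · filter_upwards [ae_restrict_mem measurableSet_Ioi] with t ht
      rw [norm_mul, Complex.norm_real, Real.norm_of_nonneg (Real.exp_pos _).le,
        Complex.norm_cpow_eq_rpow_re_of_pos ht]
  have hmv : ∀ s : ℝ, 0 < s → ∫ t in Set.Ioi (0:ℝ), (t : ℂ) ^ κ * (Real.exp (-s * t) : ℂ) =
      (s : ℂ) ^ (-(κ + 1)) * Complex.Gamma (κ + 1) := by
    intro s hs
    have := Complex.integral_cpow_mul_exp_neg_mul_Ioi (a := κ + 1) (r := s) (by simp; linarith) hs
    have harg : (s : ℂ).arg ≠ Real.pi := by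
      rw [Complex.arg_ofReal_of_nonneg hs.le]; exact Real.pi_pos.ne
    rw [one_div, Complex.inv_cpow _ _ harg, ← Complex.cpow_neg] at this
    rw [← this]
    congr 1; ext t
    simp
  have key : ∀ s : ℝ, 0 < s → ‖(s : ℂ) ^ κ * ∑' n : ℕ, a n * (((n:ℝ) ^ (-s) : ℝ) : ℂ) - c * Complex.Gamma (κ + 1)‖
      ≤ K * (Real.Gamma (b₁+1) * s ^ (κ.re - b₁) + Real.Gamma (b₂+1) * s ^ (κ.re - b₂)) := by
    intro s hs
    have hs' : (s : ℂ) ≠ 0 := by exact_mod_cast hs.ne'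
    rw [lap_rep a h0 hs (hsum s hs)]
    have e1 : ∫ t in Set.Ioi (0:ℝ), odeM a t * (Real.exp (-s * t) : ℂ) =
        (∫ t in Set.Ioi (0:ℝ), (odeM a t - c * (t : ℂ) ^ κ) * (Real.exp (-s * t) : ℂ)) +
          c * ((s : ℂ) ^ (-(κ + 1)) * Complex.Gamma (κ + 1)) := by
      rw [← hmv s hs, ← integral_const_mul, ← integral_add (hEi s hs) ((hmi s hs).const_mul c)]
      congr 1; ext t; ring
    have e2 : (s : ℂ) ^ κ * (s * ∫ t in Set.Ioi (0:ℝ), odeM a t * (Real.exp (-s * t) : ℂ)) - c * Complex.Gamma (κ + 1)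
        = (s : ℂ) ^ (κ + 1) * ∫ t in Set.Ioi (0:ℝ), (odeM a t - c * (t : ℂ) ^ κ) * (Real.exp (-s * t) : ℂ) := by
      have e3 : (s : ℂ) ^ (κ + 1) * (s : ℂ) ^ (-(κ + 1)) = 1 := by
        rw [← Complex.cpow_add _ _ hs']; simp
      have e4 : (s : ℂ) ^ (κ + 1) = (s : ℂ) ^ κ * s := by
        rw [Complex.cpow_add _ _ hs', Complex.cpow_one]
      rw [e1]
      rw [← mul_assoc, ← e4]
      linear_combination (c * Complex.Gamma (κ + 1)) * e3
    rw [e2, norm_mul, Complex.norm_cpow_eq_rpow_re_of_pos hs]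
    have h3 : ‖∫ t in Set.Ioi (0:ℝ), (odeM a t - c * (t : ℂ) ^ κ) * (Real.exp (-s * t) : ℂ)‖ ≤
        ∫ t in Set.Ioi (0:ℝ), K * (t ^ b₁ + t ^ b₂) * Real.exp (-s * t) := by
      apply norm_integral_le_of_norm_le (hbi s hs)
      filter_upwards [ae_restrict_mem measurableSet_Ioi] with t ht using hEb s t ht
    have h4 : ∫ t in Set.Ioi (0:ℝ), K * (t ^ b₁ + t ^ b₂) * Real.exp (-s * t) =
        K * (s ^ (-(b₁+1)) * Real.Gamma (b₁+1) + s ^ (-(b₂+1)) * Real.Gamma (b₂+1)) := by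
      rw [← lap_gam_val hb1 hs, ← lap_gam_val hb2 hs, ← integral_add (lap_gam_int hb1 hs) (lap_gam_int hb2 hs),
        ← integral_const_mul]
      congr 1; ext t; ring
    rw [h4] at h3
    refine (mul_le_mul_of_nonneg_left h3 (by positivity)).trans (le_of_eq ?_)
    have e5 : ∀ b : ℝ, s ^ (κ.re - b) = s ^ (κ + 1).re * s ^ (-(b+1)) := by
      intro b
      rw [← Real.rpow_add hs]; congr 1; simp; ring
    rw [e5, e5]; ring
  rw [tendsto_iff_norm_sub_tendsto_zero]
  have hp : ∀ d : ℝ, 0 < d → Tendsto (fun s : ℝ => s ^ d) (nhdsWithin 0 (Set.Ioi 0)) (nhds 0) := by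
    intro d hd
    have := (Real.continuousAt_rpow_const 0 d (Or.inr hd.le)).tendsto
    rw [Real.zero_rpow hd.ne'] at this
    exact this.mono_left nhdsWithin_le_nhds
  have hlim : Tendsto (fun s : ℝ => K * (Real.Gamma (b₁+1) * s ^ (κ.re - b₁) + Real.Gamma (b₂+1) * s ^ (κ.re - b₂)))
      (nhdsWithin 0 (Set.Ioi 0)) (nhds 0) := by
    simpa using (((hp _ (sub_pos.2 hb1')).const_mul (Real.Gamma (b₁+1))).add
      ((hp _ (sub_pos.2 hb2')).const_mul (Real.Gamma (b₂+1)))).const_mul K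
  refine squeeze_zero' (Eventually.of_forall fun s => norm_nonneg _) ?_ hlim
  filter_upwards [self_mem_nhdsWithin] with s hs using key s hs
lemma ppc_fiber (f : ℕ → ℂ) (hmul : ∀ m n : ℕ, Nat.Coprime m n → f (m * n) = f m * f n)
    (N n : ℕ) (hn : n ∈ Icc 1 N) :
    ∑ x ∈ ((Icc 1 N ×ˢ Icc 1 N).filter (fun x => x.1 * x.2 ≤ N)) with x.1 * x.2 = n,
      (if IsPrimePow x.1 ∧ Nat.Coprime x.1 x.2 then f x.1 * f x.2 * (Real.log x.1 : ℂ) else 0)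
      = f n * (Real.log n : ℂ) := by
  obtain ⟨hn1, hnN⟩ := mem_Icc.1 hn
  have hn0 : n ≠ 0 := by omega
  rw [← Finset.sum_filter]
  rw [Real.log_nat_eq_sum_factorization, Finsupp.sum, Complex.ofReal_sum, Finset.mul_sum]
  symm
  refine Finset.sum_bij (fun p _ => (p ^ n.factorization p, n / p ^ n.factorization p)) ?_ ?_ ?_ ?_
  · intro p hp
    have hp' : p.Prime := Nat.prime_of_mem_primeFactors (by simpa using hp)
    have hv : n.factorization p ≠ 0 := by simpa using Finsupp.mem_support_iff.1 hp
    have e1 := Nat.ordProj_mul_ordCompl_eq_self n p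
    have c1 := Nat.coprime_ordCompl hp' hn0
    have l1 : p ^ n.factorization p ≤ n := Nat.le_of_dvd hn1 (Nat.ordProj_dvd n p)
    have l2 : 0 < n / p ^ n.factorization p := Nat.ordCompl_pos p hn0
    have l3 : n / p ^ n.factorization p ≤ n := Nat.div_le_self _ _
    have l4 : 0 < p ^ n.factorization p := Nat.pos_of_ne_zero (pow_ne_zero _ hp'.ne_zero)
    simp only [mem_filter, mem_product, mem_Icc]
    refine ⟨⟨⟨⟨⟨l4, by omega⟩, l2, by omega⟩, by rw [e1]; exact hnN⟩, e1⟩, hp'.isPrimePow.pow hv, ?_⟩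
    exact Nat.Coprime.pow_left _ c1
  · intro p hp q hq hpq
    have hp' : p.Prime := Nat.prime_of_mem_primeFactors (by simpa using hp)
    have hq' : q.Prime := Nat.prime_of_mem_primeFactors (by simpa using hq)
    have hv : n.factorization p ≠ 0 := by simpa using Finsupp.mem_support_iff.1 hp
    have h1 : p ^ n.factorization p = q ^ n.factorization q := (Prod.ext_iff.1 hpq).1
    have h2 : p ∣ q ^ n.factorization q := h1 ▸ dvd_pow_self p hv
    exact (Nat.prime_dvd_prime_iff_eq hp' hq').1 (hp'.dvd_of_dvd_pow h2)
  · rintro ⟨d, m⟩ hx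
    simp only [mem_filter, mem_product, mem_Icc] at hx
    obtain ⟨⟨⟨⟨⟨hd1, _⟩, hm1, _⟩, _⟩, hdm⟩, hpp, hco⟩ := hx
    obtain ⟨p, k, hp, hk, rfl⟩ := (isPrimePow_nat_iff _).1 hpp
    have hpm : ¬ p ∣ m := by
      intro h
      have := Nat.Coprime.eq_one_of_dvd ((Nat.coprime_pow_left_iff hk p m).1 hco) h
      exact hp.one_lt.ne' this
    have hv : n.factorization p = k := by
      rw [← hdm, Nat.factorization_mul (pow_ne_zero _ hp.ne_zero) (by omega)]
      simp [hp.factorization_pow, Nat.factorization_eq_zero_of_not_dvd hpm]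
    refine ⟨p, ?_, ?_⟩
    · rw [Finsupp.mem_support_iff, hv]; omega
    · rw [hv, ← hdm, Nat.mul_div_cancel_left _ (by omega)]
  · intro p hp
    have hp' : p.Prime := Nat.prime_of_mem_primeFactors (by simpa using hp)
    have e1 := Nat.ordProj_mul_ordCompl_eq_self n p
    have c1 := Nat.Coprime.pow_left (n.factorization p) (Nat.coprime_ordCompl hp' hn0)
    simp only
    rw [← hmul _ _ c1, e1]
    congr 1
    rw [Nat.cast_pow, Real.log_pow]

lemma sum_dvd_le (f : ℕ → ℂ) (hmul : ∀ m n : ℕ, Nat.Coprime m n → f (m * n) = f m * f n)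
    {p : ℕ} (hp : p.Prime) (hs : Summable (fun r : ℕ => ‖f (p ^ (r + 1))‖)) (N : ℕ) :
    ∑ m ∈ (Icc 1 N).filter (fun m => p ∣ m), ‖f m‖ ≤
      (∑' r : ℕ, ‖f (p ^ (r + 1))‖) * ∑ m ∈ Icc 1 N, ‖f m‖ := by
  have key : ∀ m ∈ (Icc 1 N).filter (fun m => p ∣ m),
      m.factorization p ≠ 0 ∧ m.factorization p < N + 1 ∧ m / p ^ m.factorization p ∈ Icc 1 N ∧
      p ^ m.factorization p * (m / p ^ m.factorization p) = m ∧
      ‖f m‖ = ‖f (p ^ (m.factorization p - 1 + 1))‖ * ‖f (m / p ^ m.factorization p)‖ := by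
    intro m hm
    simp only [mem_filter, mem_Icc] at hm
    obtain ⟨⟨h1, h2⟩, h3⟩ := hm
    have hm0 : m ≠ 0 := by omega
    have hv : m.factorization p ≠ 0 := (hp.factorization_pos_of_dvd hm0 h3).ne'
    have e1 := Nat.ordProj_mul_ordCompl_eq_self m p
    have c1 := Nat.Coprime.pow_left (m.factorization p) (Nat.coprime_ordCompl hp hm0)
    refine ⟨hv, ?_, ?_, e1, ?_⟩
    · have := Nat.factorization_lt p hm0; omega
    · rw [mem_Icc]
      exact ⟨Nat.ordCompl_pos p hm0, (Nat.div_le_self _ _).trans h2⟩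
    · rw [Nat.sub_add_cancel (by omega), ← norm_mul, ← hmul _ _ c1, e1]
  calc ∑ m ∈ (Icc 1 N).filter (fun m => p ∣ m), ‖f m‖
      = ∑ m ∈ (Icc 1 N).filter (fun m => p ∣ m),
        (fun x : ℕ × ℕ => ‖f (p ^ (x.1 + 1))‖ * ‖f x.2‖) (m.factorization p - 1, m / p ^ m.factorization p) :=
        Finset.sum_congr rfl fun m hm => (key m hm).2.2.2.2
    _ = ∑ x ∈ ((Icc 1 N).filter (fun m => p ∣ m)).image
          (fun m => (m.factorization p - 1, m / p ^ m.factorization p)), ‖f (p ^ (x.1 + 1))‖ * ‖f x.2‖ := by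
        rw [Finset.sum_image]
        intro a ha b hb hab
        obtain ⟨h1, h2⟩ := Prod.ext_iff.1 hab
        simp only at h1 h2
        obtain ⟨a1, _, _, a2, _⟩ := key a ha
        obtain ⟨b1, _, _, b2, _⟩ := key b hb
        have : a.factorization p = b.factorization p := by omega
        rw [← a2, ← b2, h2, this]
    _ ≤ ∑ x ∈ range N ×ˢ Icc 1 N, ‖f (p ^ (x.1 + 1))‖ * ‖f x.2‖ := by
        apply Finset.sum_le_sum_of_subset_of_nonneg
        · intro x hx
          obtain ⟨m, hm, rfl⟩ := mem_image.1 hx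
          obtain ⟨a1, a2, a3, _, _⟩ := key m hm
          exact mem_product.2 ⟨mem_range.2 (by simp only; omega), a3⟩
        · intros; positivity
    _ = (∑ r ∈ range N, ‖f (p ^ (r + 1))‖) * ∑ m ∈ Icc 1 N, ‖f m‖ := by
        rw [Finset.sum_product, Finset.sum_mul_sum]
    _ ≤ _ := by
        gcongr
        exact hs.sum_le_tsum _ (fun _ _ => norm_nonneg _)

lemma conv_bound (f : ℕ → ℂ) (hmul : ∀ m n : ℕ, Nat.Coprime m n → f (m * n) = f m * f n)
    (hs : ∀ p : ℕ, p.Prime → Summable (fun r : ℕ => ‖f (p ^ (r + 1))‖))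
    (K2 K3 : ℝ)
    (h2 : ∀ N : ℕ, ∑ d ∈ (Icc 1 N).filter (fun d => IsPrimePow d ∧ ¬ d.Prime), ‖f d‖ * Real.log d ≤ K2)
    (h3 : ∀ N : ℕ, ∑ p ∈ (Icc 1 N).filter Nat.Prime, ‖f p‖ * Real.log p * ∑' r : ℕ, ‖f (p ^ (r + 1))‖ ≤ K3)
    (N : ℕ) :
    ‖∑ n ∈ Icc 1 N, f n * (Real.log n : ℂ) -
      ∑ x ∈ (Icc 1 N ×ˢ Icc 1 N).filter (fun x => x.1 * x.2 ≤ N),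
        (if x.1.Prime then f x.1 * f x.2 * (Real.log x.1 : ℂ) else 0)‖ ≤
      (K2 + K3) * ∑ m ∈ Icc 1 N, ‖f m‖ := by
  set Q := (Icc 1 N ×ˢ Icc 1 N).filter (fun x : ℕ × ℕ => x.1 * x.2 ≤ N) with hQ
  have e1 : ∑ n ∈ Icc 1 N, f n * (Real.log n : ℂ) = ∑ x ∈ Q,
      (if IsPrimePow x.1 ∧ Nat.Coprime x.1 x.2 then f x.1 * f x.2 * (Real.log x.1 : ℂ) else 0) := by
    rw [← Finset.sum_fiberwise_of_maps_to (s := Q) (t := Icc 1 N) (g := fun x => x.1 * x.2)]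
    · exact Finset.sum_congr rfl fun n hn => (ppc_fiber f hmul N n hn).symm
    · intro x hx
      simp only [hQ, mem_filter, mem_product, mem_Icc] at hx
      exact mem_Icc.2 ⟨Nat.mul_pos hx.1.1.1 hx.1.2.1, hx.2⟩
  rw [e1, ← Finset.sum_sub_distrib]
  set w : ℕ × ℕ → ℝ := fun x => (if IsPrimePow x.1 ∧ ¬ x.1.Prime then ‖f x.1‖ * Real.log x.1 * ‖f x.2‖ else 0)
      + (if x.1.Prime ∧ x.1 ∣ x.2 then ‖f x.1‖ * Real.log x.1 * ‖f x.2‖ else 0) with hw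
  have hun : ∀ x : ℕ × ℕ, ‖f x.1 * f x.2 * (Real.log x.1 : ℂ)‖ = ‖f x.1‖ * Real.log x.1 * ‖f x.2‖ := by
    intro x
    rw [norm_mul, norm_mul, Complex.norm_real, Real.norm_of_nonneg (Real.log_natCast_nonneg _)]; ring
  have hnn : ∀ x : ℕ × ℕ, 0 ≤ ‖f x.1‖ * Real.log x.1 * ‖f x.2‖ := fun x => by
    rw [← hun]; exact norm_nonneg _
  have hwn : ∀ x, 0 ≤ w x := by
    intro x
    simp only [hw]
    have := hnn x
    split_ifs <;> linarith
  have hterm : ∀ x : ℕ × ℕ, ‖(if IsPrimePow x.1 ∧ Nat.Coprime x.1 x.2 then f x.1 * f x.2 * (Real.log x.1 : ℂ) else 0)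
      - (if x.1.Prime then f x.1 * f x.2 * (Real.log x.1 : ℂ) else 0)‖ ≤ w x := by
    intro x
    have := hnn x
    have h0 := hun x
    simp only [hw]
    generalize f x.1 * f x.2 * (Real.log x.1 : ℂ) = u at h0 ⊢
    rw [← h0] at this ⊢
    by_cases hp : x.1.Prime
    · have hpp : IsPrimePow x.1 := hp.isPrimePow
      by_cases hd : x.1 ∣ x.2
      · have hc : ¬ Nat.Coprime x.1 x.2 := fun h => (hp.coprime_iff_not_dvd.1 h) hd
        rw [if_neg (fun h => hc h.2), if_pos hp, if_neg (fun h => h.2 hp), if_pos ⟨hp, hd⟩]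
        simp
      · have hc : Nat.Coprime x.1 x.2 := hp.coprime_iff_not_dvd.2 hd
        rw [if_pos ⟨hpp, hc⟩, if_pos hp, if_neg (fun h => h.2 hp), if_neg (fun h => hd h.2)]
        simp
    · rw [if_neg hp, if_neg (fun h : x.1.Prime ∧ x.1 ∣ x.2 => hp h.1)]
      by_cases hpp : IsPrimePow x.1
      · rw [if_pos (show IsPrimePow x.1 ∧ ¬ x.1.Prime from ⟨hpp, hp⟩)]
        split_ifs <;> simp
      · rw [if_neg (fun h => hpp h.1), if_neg (fun h => hpp h.1)]
        simp
  refine (norm_sum_le _ _).trans ((Finset.sum_le_sum fun x _ => hterm x).trans ?_)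
  refine (Finset.sum_le_sum_of_subset_of_nonneg (Finset.filter_subset _ _) (fun x _ _ => hwn x)).trans ?_
  simp only [hw]
  rw [Finset.sum_add_distrib, add_mul, Finset.sum_product, Finset.sum_product]
  simp only
  have hM : 0 ≤ ∑ m ∈ Icc 1 N, ‖f m‖ := Finset.sum_nonneg fun _ _ => norm_nonneg _
  apply add_le_add
  · refine le_trans (le_of_eq ?_) (mul_le_mul_of_nonneg_right (h2 N) hM)
    rw [Finset.sum_filter, Finset.sum_mul]
    apply Finset.sum_congr rfl
    intro d _
    split_ifs
    · rw [Finset.mul_sum]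
    · simp
  · refine le_trans ?_ (mul_le_mul_of_nonneg_right (h3 N) hM)
    rw [Finset.sum_filter, Finset.sum_mul]
    apply Finset.sum_le_sum
    intro d _
    by_cases hp : d.Prime
    · simp only [hp, true_and, if_true]
      rw [← Finset.sum_filter, ← Finset.mul_sum, mul_assoc (‖f d‖ * Real.log d)]
      exact mul_le_mul_of_nonneg_left (sum_dvd_le f hmul hp (hs d hp) N)
        (mul_nonneg (norm_nonneg _) (Real.log_natCast_nonneg _))
    · simp [hp]

lemma prime_sum_eq (f : ℕ → ℂ) (t : ℝ) (N : ℕ) (hN : N = ⌊Real.exp t⌋₊) :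
    ∑ x ∈ (Icc 1 N ×ˢ Icc 1 N).filter (fun x => x.1 * x.2 ≤ N),
        (if x.1.Prime then f x.1 * f x.2 * (Real.log x.1 : ℂ) else 0) =
    ∑ m ∈ Icc 1 N, f m * ∑ p ∈ (range (⌊Real.exp t / m⌋₊ + 1)).filter Nat.Prime, f p * (Real.log p : ℂ) := by
  rw [Finset.sum_filter, Finset.sum_product_right]
  apply Finset.sum_congr rfl
  intro m hm
  obtain ⟨hm1, hm2⟩ := mem_Icc.1 hm
  rw [Nat.floor_div_natCast, ← hN, Finset.mul_sum, ← Finset.sum_filter, ← Finset.sum_filter]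
  apply Finset.sum_congr
  · ext p
    simp only [mem_filter, mem_Icc, mem_range, Nat.lt_succ_iff, Nat.le_div_iff_mul_le hm1]
    constructor
    · rintro ⟨⟨_, h⟩, hp⟩; exact ⟨h, hp⟩
    · rintro ⟨h, hp⟩
      exact ⟨⟨⟨hp.pos, le_trans (Nat.le_mul_of_pos_right p hm1) h⟩, h⟩, hp⟩
  · intros; ring

lemma conv_main (f : ℕ → ℂ) (κ : ℂ) (hmul : ∀ m n : ℕ, Nat.Coprime m n → f (m * n) = f m * f n)
    (hs : ∀ p : ℕ, p.Prime → Summable (fun r : ℕ => ‖f (p ^ (r + 1))‖))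
    (K2 K3 CA CS β : ℝ)
    (h2 : ∀ N : ℕ, ∑ d ∈ (Icc 1 N).filter (fun d => IsPrimePow d ∧ ¬ d.Prime), ‖f d‖ * Real.log d ≤ K2)
    (h3 : ∀ N : ℕ, ∑ p ∈ (Icc 1 N).filter Nat.Prime, ‖f p‖ * Real.log p * ∑' r : ℕ, ‖f (p ^ (r + 1))‖ ≤ K3)
    (hA : ∀ y : ℝ, 1 ≤ y →
      ‖∑ p ∈ (range (⌊y⌋₊ + 1)).filter Nat.Prime, f p * (Real.log p : ℂ) - κ * (Real.log y : ℂ)‖ ≤ CA)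
    (hS : ∀ t : ℝ, Real.log 2 ≤ t → ∑ n ∈ Icc 1 ⌊Real.exp t⌋₊, ‖f n‖ ≤ CS * t ^ β)
    (t : ℝ) (ht : Real.log 2 ≤ t) :
    ‖(t : ℂ) * odeM f t - (κ + 1) * odeF f t‖ ≤ (K2 + K3 + CA) * CS * t ^ β := by
  set N := ⌊Real.exp t⌋₊ with hN
  have hcb := conv_bound f hmul hs K2 K3 h2 h3 N
  rw [prime_sum_eq f t N hN] at hcb
  have hM : 0 ≤ ∑ m ∈ Icc 1 N, ‖f m‖ := Finset.sum_nonneg fun _ _ => norm_nonneg _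
  have hK2 : 0 ≤ K2 := by simpa using h2 0
  have hK3 : 0 ≤ K3 := by simpa using h3 0
  have hCA : 0 ≤ CA := (norm_nonneg _).trans (hA 1 le_rfl)
  have e1 : (t : ℂ) * odeM f t - (κ + 1) * odeF f t =
      ∑ n ∈ Icc 1 N, f n * (Real.log n : ℂ) - κ * odeF f t := by
    have : (t : ℂ) * odeM f t - odeF f t = ∑ n ∈ Icc 1 N, f n * (Real.log n : ℂ) := by
      unfold odeM odeF
      rw [Finset.mul_sum, ← Finset.sum_sub_distrib]
      apply Finset.sum_congr rfl
      intros; rw [Complex.ofReal_sub]; ring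
    rw [← this]; ring
  have e2 : ‖∑ m ∈ Icc 1 N, f m * ∑ p ∈ (range (⌊Real.exp t / m⌋₊ + 1)).filter Nat.Prime, f p * (Real.log p : ℂ)
      - κ * odeF f t‖ ≤ CA * ∑ m ∈ Icc 1 N, ‖f m‖ := by
    unfold odeF
    rw [Finset.mul_sum, Finset.mul_sum, ← Finset.sum_sub_distrib]
    refine norm_sum_le_of_le _ ?_
    intro m hm
    obtain ⟨hm1, hm2⟩ := mem_Icc.1 hm
    have hm0 : (0:ℝ) < m := by exact_mod_cast hm1
    have hle : (m:ℝ) ≤ Real.exp t := (Nat.le_floor_iff (Real.exp_pos t).le).1 hm2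
    have := hA (Real.exp t / m) ((one_le_div hm0).2 hle)
    rw [Real.log_div (Real.exp_pos t).ne' hm0.ne', Real.log_exp] at this
    calc _ = ‖f m * (∑ p ∈ (range (⌊Real.exp t / m⌋₊ + 1)).filter Nat.Prime, f p * (Real.log p : ℂ)
          - κ * ((t - Real.log m : ℝ) : ℂ))‖ := by congr 1; ring
      _ ≤ ‖f m‖ * CA := by rw [norm_mul]; gcongr
      _ = _ := by ring
  rw [e1]
  calc _ ≤ _ := norm_sub_le_norm_sub_add_norm_sub _ (∑ m ∈ Icc 1 N, f m * ∑ p ∈ (range (⌊Real.exp t / m⌋₊ + 1)).filter Nat.Prime, f p * (Real.log p : ℂ)) _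
    _ ≤ (K2 + K3) * ∑ m ∈ Icc 1 N, ‖f m‖ + CA * ∑ m ∈ Icc 1 N, ‖f m‖ := add_le_add hcb e2
    _ = (K2 + K3 + CA) * ∑ m ∈ Icc 1 N, ‖f m‖ := by ring
    _ ≤ (K2 + K3 + CA) * (CS * t ^ β) := by
        have := hS t ht
        gcongr
    _ = _ := by ring
lemma enn_term (z : ℂ) (x : ℝ) (n : ℕ) (hn : n ≠ 0) :
    (‖z‖₊ : ℝ≥0∞) * ENNReal.ofReal x / (n : ℝ≥0∞) = ENNReal.ofReal (‖z / (n:ℂ)‖ * x) := by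
  have h1 : (‖z‖₊ : ℝ≥0∞) = ENNReal.ofReal ‖z‖ := (ofReal_norm z).symm
  have hn' : (0:ℝ) < n := by exact_mod_cast Nat.pos_of_ne_zero hn
  rw [h1, ← ENNReal.ofReal_mul (norm_nonneg _), ← ENNReal.ofReal_natCast n, ← ENNReal.ofReal_div_of_pos hn']
  congr 1
  rw [norm_div, Complex.norm_natCast]; ring

lemma condB_a (g : ℕ → ℂ) (hB : CondB g) :
    Summable (fun x : Nat.Primes × ℕ => ‖g ((x.1:ℕ) ^ (x.2 + 2)) / (((x.1:ℕ) ^ (x.2+2) : ℕ) : ℂ)‖ *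
      Real.log (((x.1:ℕ) ^ (x.2 + 2) : ℕ))) := by
  unfold CondB at hB
  have h2 := (ENNReal.add_lt_top.1 hB).2
  have h3 : (∑' p : Nat.Primes, ∑' r : ℕ, ENNReal.ofReal (‖g ((p:ℕ) ^ (r + 2)) / (((p:ℕ) ^ (r+2) : ℕ) : ℂ)‖ *
      Real.log (((p:ℕ) ^ (r + 2) : ℕ)))) ≠ ⊤ := by
    refine ne_of_lt (lt_of_eq_of_lt ?_ h2)
    refine tsum_congr fun p => tsum_congr fun r => ?_
    rw [enn_term _ _ _ (pow_ne_zero _ p.2.ne_zero)]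
  rw [← ENNReal.tsum_prod (f := fun (p : Nat.Primes) (r : ℕ) => ENNReal.ofReal (‖g ((p:ℕ) ^ (r + 2)) / (((p:ℕ) ^ (r+2) : ℕ) : ℂ)‖ *
      Real.log (((p:ℕ) ^ (r + 2) : ℕ))))] at h3
  have := ENNReal.summable_toReal h3
  refine this.congr fun x => ?_
  rw [ENNReal.toReal_ofReal (mul_nonneg (norm_nonneg _) (Real.log_natCast_nonneg _))]

lemma condB_b (g : ℕ → ℂ) (hB : CondB g) (p : Nat.Primes) :
    Summable (fun r : ℕ => ‖g ((p:ℕ) ^ (r + 1)) / (((p:ℕ) ^ (r+1) : ℕ) : ℂ)‖) := by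
  have h := (condB_a g hB).prod_factor p
  rw [← summable_nat_add_iff 1]
  refine Summable.of_nonneg_of_le (fun _ => norm_nonneg _) ?_ (h.mul_right (Real.log 2)⁻¹)
  intro r
  have hl : Real.log 2 ≤ Real.log (((p:ℕ) ^ (r + 2) : ℕ)) := by
    apply Real.log_le_log (by norm_num)
    have : 2 ≤ (p:ℕ) ^ (r+2) := p.2.two_le.trans (Nat.le_self_pow (by omega) _)
    exact_mod_cast this
  have h2 : 0 < Real.log 2 := Real.log_pos (by norm_num)
  rw [← div_eq_mul_inv, le_div_iff₀ h2]
  exact mul_le_mul_of_nonneg_left hl (norm_nonneg _)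

lemma condB_c (g : ℕ → ℂ) (hB : CondB g) :
    Summable (fun p : Nat.Primes => ‖g (p:ℕ) / ((p:ℕ) : ℂ)‖ * Real.log (p:ℕ) *
      ∑' r : ℕ, ‖g ((p:ℕ) ^ (r + 1)) / (((p:ℕ) ^ (r+1) : ℕ) : ℂ)‖) := by
  have hB' := hB
  unfold CondB at hB
  have h2 := (ENNReal.add_lt_top.1 hB).1
  have h3 : (∑' p : Nat.Primes, ENNReal.ofReal (‖g (p:ℕ) / ((p:ℕ) : ℂ)‖ * Real.log (p:ℕ) *
      ∑' r : ℕ, ‖g ((p:ℕ) ^ (r + 1)) / (((p:ℕ) ^ (r+1) : ℕ) : ℂ)‖)) ≠ ⊤ := by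
    refine ne_of_lt (lt_of_eq_of_lt ?_ h2)
    refine tsum_congr fun p => ?_
    rw [enn_term _ _ _ p.2.ne_zero, ENNReal.ofReal_mul (mul_nonneg (norm_nonneg _) (Real.log_natCast_nonneg _)),
      ENNReal.ofReal_tsum_of_nonneg (fun _ => norm_nonneg _) (condB_b g hB' p)]
    congr 1
    refine tsum_congr fun r => ?_
    have := enn_term (g ((p:ℕ)^(r+1))) 1 _ (pow_ne_zero (r+1) p.2.ne_zero)
    rw [ENNReal.ofReal_one, mul_one, mul_one] at this
    exact this.symm
  have := ENNReal.summable_toReal h3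
  refine this.congr fun x => ?_
  rw [ENNReal.toReal_ofReal]
  exact mul_nonneg (mul_nonneg (norm_nonneg _) (Real.log_natCast_nonneg _)) (tsum_nonneg fun _ => norm_nonneg _)

lemma sum_primes_le (h : ℕ → ℝ) (h0 : ∀ n, 0 ≤ h n) (hs : Summable fun p : Nat.Primes => h p) (s : Finset ℕ) :
    ∑ p ∈ s.filter Nat.Prime, h p ≤ ∑' p : Nat.Primes, h p := by
  have : ∑ p ∈ s.filter Nat.Prime, h p = ∑ p ∈ s.subtype Nat.Prime, h p := by
    rw [← Finset.subtype_map, Finset.sum_map]; rfl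
  rw [this]
  exact Summable.sum_le_tsum (ι := Nat.Primes) (s.subtype Nat.Prime) (fun i _ => h0 i) hs

lemma condB_d (g : ℕ → ℂ) (hB : CondB g) : ∃ K2 : ℝ, ∀ N : ℕ,
    ∑ d ∈ (Icc 1 N).filter (fun d => IsPrimePow d ∧ ¬ d.Prime), ‖g d / (d:ℂ)‖ * Real.log d ≤ K2 := by
  refine ⟨∑' x : Nat.Primes × ℕ, ‖g ((x.1:ℕ) ^ (x.2 + 2)) / (((x.1:ℕ) ^ (x.2+2) : ℕ) : ℂ)‖ *
      Real.log (((x.1:ℕ) ^ (x.2 + 2) : ℕ)), fun N => ?_⟩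
  have hs := condB_a g hB
  set e : Nat.Primes × ℕ → ℕ := fun x => (x.1:ℕ) ^ (x.2+2) with he
  have hinj : Function.Injective e := by
    rintro ⟨p, r⟩ ⟨q, k⟩ h
    simp only [he] at h
    have := Nat.Prime.pow_inj' p.2 q.2 (by omega) (by omega) h
    ext
    · exact Subtype.ext this.1
    · simpa using this.2
  have : ∑ d ∈ (Icc 1 N).filter (fun d => IsPrimePow d ∧ ¬ d.Prime), ‖g d / (d:ℂ)‖ * Real.log d
     = ∑ x ∈ ((Icc 1 N).filter (fun d => IsPrimePow d ∧ ¬ d.Prime)).preimage e hinj.injOn,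
       ‖g (e x) / ((e x : ℕ):ℂ)‖ * Real.log (e x : ℕ) := by
    rw [Finset.sum_preimage e _ hinj.injOn (fun d => ‖g d / (d:ℂ)‖ * Real.log d)]
    intro d hd hd'
    exfalso
    apply hd'
    obtain ⟨_, hpp, hnp⟩ := mem_filter.1 hd
    obtain ⟨p, k, hp, hk, rfl⟩ := (isPrimePow_nat_iff _).1 hpp
    have hk2 : 2 ≤ k := by
      rcases Nat.lt_or_ge k 2 with h | h
      · have : k = 1 := by omega
        subst this; simp [hp] at hnp
      · exact h
    exact ⟨(⟨p, hp⟩, k-2), by simp [he, Nat.sub_add_cancel hk2]⟩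
  rw [this]
  exact hs.sum_le_tsum _ (fun i _ => mul_nonneg (norm_nonneg _) (Real.log_natCast_nonneg _))

lemma condB_tau (g : ℕ → ℂ) (hB : CondB g) :
    Summable (fun p : Nat.Primes => ∑' r : ℕ, ‖g ((p:ℕ) ^ (r + 2)) / (((p:ℕ) ^ (r+2) : ℕ) : ℂ)‖) := by
  have h2 : 0 < Real.log 2 := Real.log_pos (by norm_num)
  have : Summable (fun x : Nat.Primes × ℕ => ‖g ((x.1:ℕ) ^ (x.2 + 2)) / (((x.1:ℕ) ^ (x.2+2) : ℕ) : ℂ)‖) := by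
    refine Summable.of_nonneg_of_le (fun _ => norm_nonneg _) ?_ ((condB_a g hB).mul_right (Real.log 2)⁻¹)
    rintro ⟨p, r⟩
    have hl : Real.log 2 ≤ Real.log (((p:ℕ) ^ (r + 2) : ℕ)) := by
      apply Real.log_le_log (by norm_num)
      have : 2 ≤ (p:ℕ) ^ (r+2) := p.2.two_le.trans (Nat.le_self_pow (by omega) _)
      exact_mod_cast this
    rw [← div_eq_mul_inv, le_div_iff₀ h2]
    exact mul_le_mul_of_nonneg_left hl (norm_nonneg _)
  exact this.prod

lemma condB_sq (g : ℕ → ℂ) (hB : CondB g) :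
    Summable (fun p : Nat.Primes => ‖g (p:ℕ) / ((p:ℕ) : ℂ)‖ ^ 2) := by
  have h2 : 0 < Real.log 2 := Real.log_pos (by norm_num)
  refine Summable.of_nonneg_of_le (fun _ => by positivity) ?_ ((condB_c g hB).mul_right (Real.log 2)⁻¹)
  intro p
  have hl : Real.log 2 ≤ Real.log (p:ℕ) := by
    apply Real.log_le_log (by norm_num)
    exact_mod_cast p.2.two_le
  rw [← div_eq_mul_inv, le_div_iff₀ h2]
  have h3 : ‖g (p:ℕ) / ((p:ℕ) : ℂ)‖ ≤ ∑' r : ℕ, ‖g ((p:ℕ) ^ (r + 1)) / (((p:ℕ) ^ (r+1) : ℕ) : ℂ)‖ := by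
    have := (condB_b g hB p).le_tsum 0 (fun _ _ => norm_nonneg _)
    simpa using this
  calc _ = ‖g (p:ℕ) / ((p:ℕ) : ℂ)‖ * Real.log 2 * ‖g (p:ℕ) / ((p:ℕ) : ℂ)‖ := by ring
    _ ≤ _ := by gcongr
lemma tsum_split (f : ℕ → ℝ) (hs : Summable fun r => f (r+1)) :
    ∑' r, f r = f 0 + f 1 + ∑' r, f (r+2) := by
  have h1 : Summable f := (summable_nat_add_iff 1).1 hs
  rw [h1.tsum_eq_zero_add, hs.tsum_eq_zero_add, add_assoc]

lemma sum_norm_le (f : ℕ → ℂ) (hf1 : f 1 = 1) (hmul : ∀ m n : ℕ, Nat.Coprime m n → f (m * n) = f m * f n)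
    (hs : ∀ p : ℕ, p.Prime → Summable (fun r : ℕ => ‖f (p ^ (r + 1))‖)) (T : ℝ)
    (hT : ∀ s : Finset ℕ, ∑ p ∈ s.filter Nat.Prime, ∑' r : ℕ, ‖f (p ^ (r + 2))‖ ≤ T) (N : ℕ) :
    ∑ n ∈ Icc 1 N, ‖f n‖ ≤ Real.exp T * ∏ p ∈ (range (N+1)).filter Nat.Prime, (1 + ‖f p‖) := by
  obtain ⟨h1, h2⟩ := EulerProduct.summable_and_hasSum_smoothNumbers_prod_primesBelow_tsum
    (f := fun n => ‖f n‖) (by simp [hf1]) (by intro m n h; simp [hmul m n h])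
    (by
      intro p hp
      simp only [norm_norm]
      exact (summable_nat_add_iff 1).1 (hs p hp)) (N+1)
  simp only [norm_norm] at h1
  have hle : ∑ n ∈ Icc 1 N, ‖f n‖ ≤ ∏ p ∈ (N+1).primesBelow, ∑' n : ℕ, ‖f (p ^ n)‖ := by
    rw [← h2.tsum_eq]
    have e : ∑ n ∈ Icc 1 N, ‖f n‖ = ∑ m ∈ (Icc 1 N).subtype (· ∈ (N+1).smoothNumbers), ‖f m‖ := by
      rw [Finset.sum_subtype_of_mem (fun n => ‖f n‖)]
      intro n hn
      obtain ⟨a, b⟩ := mem_Icc.1 hn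
      exact Nat.mem_smoothNumbers_of_lt a (by omega)
    rw [e]
    exact Summable.sum_le_tsum (ι := (N+1).smoothNumbers) _ (fun _ _ => norm_nonneg _) h1
  refine hle.trans ?_
  have hstep : ∏ p ∈ (N+1).primesBelow, ∑' n : ℕ, ‖f (p ^ n)‖ ≤
      ∏ p ∈ (range (N+1)).filter Nat.Prime, (Real.exp (∑' r : ℕ, ‖f (p ^ (r + 2))‖) * (1 + ‖f p‖)) := by
    refine Finset.prod_le_prod (fun _ _ => tsum_nonneg fun _ => norm_nonneg _) ?_
    intro p hp
    have hp' : p.Prime := Nat.prime_of_mem_primesBelow hp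
    rw [tsum_split (fun r => ‖f (p ^ r)‖) (hs p hp')]
    have t0 : 0 ≤ ∑' r : ℕ, ‖f (p ^ (r + 2))‖ := tsum_nonneg fun _ => norm_nonneg _
    have := Real.add_one_le_exp (∑' r : ℕ, ‖f (p ^ (r + 2))‖)
    simp only [pow_zero, pow_one, hf1, norm_one]
    have := norm_nonneg (f p)
    nlinarith
  refine hstep.trans ?_
  rw [Finset.prod_mul_distrib, ← Real.exp_sum]
  gcongr
  exact hT _

lemma summable_rpow (f : ℕ → ℂ) (CS β : ℝ)
    (hS : ∀ t : ℝ, Real.log 2 ≤ t → ∑ n ∈ Icc 1 ⌊Real.exp t⌋₊, ‖f n‖ ≤ CS * t ^ β) (s : ℝ) (hs : 0 < s) :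
    Summable fun n : ℕ => ‖f n‖ * (n:ℝ)^(-s) := by
  have hO : (fun n ↦ ∑ k ∈ Icc 1 n, ‖f k‖) =O[atTop] fun n : ℕ ↦ (n : ℝ) ^ (s/2) := by
    have h1 : (fun n : ℕ => ∑ k ∈ Icc 1 n, ‖f k‖) =O[atTop] fun n : ℕ => Real.log n ^ β := by
      refine Asymptotics.IsBigO.of_bound CS ?_
      filter_upwards [eventually_ge_atTop 2] with n hn
      have hn' : (2:ℝ) ≤ n := by exact_mod_cast hn
      have := hS (Real.log n) (Real.log_le_log (by norm_num) hn')
      rw [Real.exp_log (by linarith), Nat.floor_natCast] at this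
      rw [Real.norm_of_nonneg (Finset.sum_nonneg fun _ _ => norm_nonneg _),
        Real.norm_of_nonneg (Real.rpow_nonneg (Real.log_natCast_nonneg _) _)]
      exact this
    exact h1.trans ((isLittleO_log_rpow_rpow_atTop β (half_pos hs)).isBigO.comp_tendsto tendsto_natCast_atTop_atTop)
  have := LSeriesSummable_of_sum_norm_bigO (s := (s:ℂ)) hO (by positivity) (by simp; linarith)
  rw [LSeriesSummable] at this
  have h2 := this.norm
  rw [← summable_nat_add_iff 1] at h2 ⊢
  refine h2.congr fun n => ?_
  rw [LSeries.norm_term_eq, if_neg (by omega)]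
  simp only [Complex.ofReal_re]
  rw [Real.rpow_neg (by positivity)]; rfl

lemma condA_ext (g : ℕ → ℂ) (κ : ℂ) (hA : CondA g κ) : ∃ CA : ℝ, ∀ y : ℝ, 1 ≤ y →
      ‖∑ p ∈ (range (⌊y⌋₊ + 1)).filter Nat.Prime, g p / (p:ℂ) * (Real.log p : ℂ) - κ * (Real.log y : ℂ)‖ ≤ CA := by
  obtain ⟨C, hC⟩ := hA
  refine ⟨max C (‖κ‖ * Real.log 2), fun y hy => ?_⟩
  rcases le_or_gt 2 y with h | h
  · refine le_trans (le_of_eq ?_) ((hC y h).trans (le_max_left _ _))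
    congr 2
    exact Finset.sum_congr rfl fun p _ => by ring
  · refine le_trans ?_ (le_max_right _ _)
    have h1 : ⌊y⌋₊ = 1 := by
      rw [Nat.floor_eq_iff (by linarith)]; constructor <;> norm_num <;> linarith
    have h2 : (range (1 + 1)).filter Nat.Prime = ∅ := by decide
    rw [h1, h2, Finset.sum_empty, zero_sub, norm_neg, norm_mul, Complex.norm_real,
      Real.norm_of_nonneg (Real.log_nonneg hy)]
    gcongr
noncomputable def pa (f : ℕ → ℂ) (κ : ℂ) (n : ℕ) : ℂ := if n.Prime then f n - κ / (n:ℂ) else 0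

lemma pa_summable (f : ℕ → ℂ) (κ : ℂ)
    (hsum : ∀ s : ℝ, 0 < s → Summable fun n : ℕ => ‖f n‖ * (n:ℝ)^(-s)) (s : ℝ) (hs : 0 < s) :
    Summable fun n : ℕ => ‖pa f κ n‖ * (n:ℝ)^(-s) := by
  have h1 : Summable fun n : ℕ => (n:ℝ) ^ (-1-s) := Real.summable_nat_rpow.2 (by linarith)
  refine Summable.of_nonneg_of_le (fun n => by positivity) ?_ ((hsum s hs).add (h1.mul_left ‖κ‖))
  intro n
  unfold pa
  split_ifs with h
  · have hn : (0:ℝ) < n := by exact_mod_cast h.pos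
    have : (n:ℝ) ^ (-1-s) = (n:ℝ)⁻¹ * (n:ℝ)^(-s) := by
      rw [sub_eq_add_neg, Real.rpow_add hn, Real.rpow_neg_one]
    rw [this]
    calc _ ≤ (‖f n‖ + ‖κ / (n:ℂ)‖) * (n:ℝ)^(-s) := by gcongr; exact norm_sub_le _ _
      _ = _ := by rw [norm_div, Complex.norm_natCast]; ring
  · simp only [norm_zero, zero_mul]; positivity

lemma prime_laplace (f : ℕ → ℂ) (κ : ℂ) (CA : ℝ)
    (hA : ∀ y : ℝ, 1 ≤ y →
      ‖∑ p ∈ (range (⌊y⌋₊ + 1)).filter Nat.Prime, f p * (Real.log p : ℂ) - κ * (Real.log y : ℂ)‖ ≤ CA)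
    (hsum : ∀ s : ℝ, 0 < s → Summable fun n : ℕ => ‖f n‖ * (n:ℝ)^(-s)) :
    ∃ G : ℂ, Tendsto (fun N : ℕ => ∑ k ∈ range N, pa f κ k) atTop (nhds G) ∧
      Tendsto (fun s : ℝ => ∑' n : ℕ, pa f κ n * (((n:ℝ)^(-s) : ℝ) : ℂ)) (nhdsWithin 0 (Set.Ioi 0)) (nhds G) := by
  obtain ⟨C1, hC1⟩ := mertens_one
  have hC10 : 0 ≤ C1 := (abs_nonneg _).trans (hC1 1 le_rfl)
  have hCA : 0 ≤ CA := (norm_nonneg _).trans (hA 1 le_rfl)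
  have p0 : pa f κ 0 = 0 := by unfold pa; rw [if_neg Nat.not_prime_zero]
  have hb : ∀ n, ‖∑ k ∈ range n, pa f κ k * (Real.log k : ℂ)‖ ≤ CA + ‖κ‖ * C1 := by
    intro n
    rcases Nat.lt_or_ge n 2 with h | h
    · have : ∑ k ∈ range n, pa f κ k * (Real.log k : ℂ) = 0 := by
        apply Finset.sum_eq_zero
        intro k hk
        have : k = 0 := by have := mem_range.1 hk; omega
        rw [this, p0, zero_mul]
      rw [this, norm_zero]; positivity
    · obtain ⟨N, rfl⟩ : ∃ N, n = N + 1 := ⟨n-1, by omega⟩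
      have hN : 1 ≤ N := by omega
      have a1 := hA N (by exact_mod_cast hN)
      have a2 := hC1 N hN
      rw [Nat.floor_natCast] at a1
      have e : ∑ k ∈ range (N+1), pa f κ k * (Real.log k : ℂ) =
          (∑ p ∈ (range (N + 1)).filter Nat.Prime, f p * (Real.log p : ℂ) - κ * (Real.log N : ℂ))
          - κ * ((∑ p ∈ (range (N+1)).filter Nat.Prime, Real.log p / p - Real.log N : ℝ) : ℂ) := by
        rw [Complex.ofReal_sub, Complex.ofReal_sum, mul_sub, sub_sub_sub_cancel_right, Finset.mul_sum,
          ← Finset.sum_sub_distrib, Finset.sum_filter]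
        apply Finset.sum_congr rfl
        intro k _
        unfold pa
        split_ifs
        · rw [Complex.ofReal_div, Complex.ofReal_natCast]; ring
        · ring
      rw [e]
      refine (norm_sub_le _ _).trans (add_le_add a1 ?_)
      rw [norm_mul, Complex.norm_real]
      gcongr
      exact a2
  obtain ⟨G, hG1, hG2⟩ := abel_conv (pa f κ) _ hb
  refine ⟨G, hG1, ?_⟩
  set K := CA + ‖κ‖ * C1 with hK
  have hK0 : 0 ≤ K := by positivity
  have hl2 : 0 < Real.log 2 := Real.log_pos (by norm_num)
  have := laplace_limit (pa f κ) p0 0 G (1/2) (2 * K * (Real.log 2)^(-(1/2):ℝ)) (by simp) (by norm_num) (by norm_num)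
    (pa_summable f κ hsum) (by
      intro t ht
      have ht0 : 0 < t := hl2.trans_le ht
      have e : odeM (pa f κ) t = ∑ k ∈ range (⌊Real.exp t⌋₊ + 1), pa f κ k := by
        unfold odeM
        rw [Finset.range_eq_Ico, Finset.sum_eq_sum_Ico_succ_bot (by omega), p0, zero_add]; rfl
      have h2 : 2 ≤ Real.exp t := by
        rw [← Real.exp_log (show (0:ℝ) < 2 by norm_num)]; exact Real.exp_le_exp.2 ht
      have h2' : 2 ≤ ⌊Real.exp t⌋₊ := Nat.le_floor (by exact_mod_cast h2)
      have b := hG2 (⌊Real.exp t⌋₊ + 1) (by omega)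
      rw [e, Complex.cpow_zero, mul_one]
      refine b.trans ?_
      have hlog : t ≤ Real.log ((⌊Real.exp t⌋₊ + 1 : ℕ)) := by
        rw [← Real.log_exp t]
        apply Real.log_le_log (Real.exp_pos t)
        rw [Real.log_exp]
        push_cast
        exact (Nat.lt_floor_add_one _).le
      calc 2 * K * (Real.log ((⌊Real.exp t⌋₊ + 1 : ℕ)))⁻¹ ≤ 2 * K * t⁻¹ := by
            gcongr
        _ = 2 * K * (t ^ (-(1/2):ℝ) * t ^ ((1/2:ℝ) - 1)) := by
            rw [← Real.rpow_add ht0, ← Real.rpow_neg_one]; norm_num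
        _ ≤ 2 * K * ((Real.log 2) ^ (-(1/2):ℝ) * t ^ ((1/2:ℝ) - 1)) := by
            have : t ^ (-(1/2):ℝ) ≤ (Real.log 2) ^ (-(1/2):ℝ) :=
              Real.rpow_le_rpow_of_nonpos hl2 ht (by norm_num)
            gcongr
        _ = _ := by ring)
  simpa using this
lemma exp_sub_one_bound (w : ℂ) : ‖Complex.exp w - 1‖ ≤ ‖w‖ * Real.exp ‖w‖ := by
  have := Complex.norm_exp_sub_sum_le_norm_mul_exp w 1
  simpa using this

lemma exp_sub_two_bound (w : ℂ) : ‖Complex.exp w - 1 - w‖ ≤ ‖w‖^2 * Real.exp ‖w‖ := by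
  have := Complex.norm_exp_sub_sum_le_norm_mul_exp w 2
  simpa [Finset.sum_range_succ, sub_sub] using this

lemma log_bound (y : ℝ) (h0 : 0 ≤ y) (h1 : y ≤ 1/2) : |Real.log (1 - y) + y| ≤ y ^ 2 := by
  have a1 : Real.log (1-y) ≤ -y := by
    have := Real.log_le_sub_one_of_pos (show 0 < 1 - y by linarith); linarith
  rw [abs_of_nonpos (by linarith)]
  have hder : 0 ≤ Real.log (1-y) + y + y^2 := by
    have b1 : -(y + y^2) ≤ Real.log (1-y) := by
      rw [Real.le_log_iff_exp_le (by linarith)]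
      have := Real.exp_pos (y + y^2)
      rw [Real.exp_neg, inv_le_comm₀ (this) (by linarith)]
      refine le_trans ?_ (Real.quadratic_le_exp_of_nonneg (by positivity))
      rw [inv_le_iff_one_le_mul₀ (by linarith)]
      have e : (1 + (y + y^2) + (y+y^2)^2/2) * (1-y) = 1 + y^2 * (1 - y*(1 + y + y^2))/2 := by ring
      rw [e]
      have : y * (1 + y + y^2) ≤ 1 := by nlinarith [mul_nonneg h0 h0, mul_nonneg (mul_nonneg h0 h0) h0]
      have := mul_nonneg (sq_nonneg y) (show 0 ≤ 1 - y * (1 + y + y^2) by linarith)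
      linarith
    linarith
  linarith

lemma tsum_split_c (f : ℕ → ℂ) (hs : Summable f) :
    ∑' r, f r = f 0 + f 1 + ∑' r, f (r+2) := by
  have h1 : Summable fun r => f (r+1) := (summable_nat_add_iff 1).2 hs
  rw [hs.tsum_eq_zero_add, h1.tsum_eq_zero_add, add_assoc]

lemma R_bound (κ : ℂ) (F : ℝ) (b : ℕ → ℂ) (hb0 : b 0 = 1) (hF : ‖b 1‖ ≤ F) (hs : Summable fun r => ‖b r‖)
    (u y q : ℝ) (hu0 : 0 ≤ u) (hu1 : u ≤ 1) (hy0 : 0 ≤ y) (hy1 : y ≤ 1/2) (hyq : y ≤ q) :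
    ‖(1 - (y:ℂ)) ^ κ * (∑' r, b r * (u:ℂ)^r) * Complex.exp (-(b 1 * u - κ * y)) - 1‖ ≤
      (‖κ‖ * Real.exp ‖κ‖ + 1) * (Real.exp F * (2 * ‖b 1‖^2 + ∑' r, ‖b (r+2)‖)) + ‖κ‖ * Real.exp ‖κ‖ * q^2 := by
  set τ := ∑' r, ‖b (r+2)‖ with hτ
  have hs2 : Summable fun r => ‖b (r+2)‖ := (summable_nat_add_iff 2).2 hs
  have hτ0 : 0 ≤ τ := tsum_nonneg fun _ => norm_nonneg _
  have hnu : ∀ r, ‖b r * (u:ℂ)^r‖ ≤ ‖b r‖ := by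
    intro r
    rw [norm_mul, norm_pow, Complex.norm_real, Real.norm_of_nonneg hu0]
    exact mul_le_of_le_one_right (norm_nonneg _) (pow_le_one₀ hu0 hu1)
  have hsb : Summable fun r => b r * (u:ℂ)^r := Summable.of_norm_bounded hs hnu
  set δ := ∑' r, b (r+2) * (u:ℂ)^(r+2) with hδ
  have hδτ : ‖δ‖ ≤ τ := tsum_of_norm_bounded hs2.hasSum (fun r => hnu (r+2))
  set z := b 1 * (u:ℂ) with hz
  have hzb : ‖z‖ ≤ ‖b 1‖ := by have := hnu 1; rwa [pow_one] at this
  have hE : ∑' r, b r * (u:ℂ)^r = 1 + z + δ := by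
    rw [tsum_split_c _ hsb]; simp [hb0, hz, hδ]
  set w : ℂ := κ * ((Real.log (1-y) + y : ℝ) : ℂ) with hw
  have hA : (1 - (y:ℂ)) ^ κ * Complex.exp (κ * y) = Complex.exp w := by
    have h1 : (1 - (y:ℂ)) ≠ 0 := by
      rw [← Complex.ofReal_one, ← Complex.ofReal_sub, Complex.ofReal_ne_zero]; linarith
    have h2 : Complex.log (1 - (y:ℂ)) = ((Real.log (1-y) : ℝ) : ℂ) := by
      rw [Complex.ofReal_log (by linarith)]; push_cast; rfl
    rw [Complex.cpow_def_of_ne_zero h1, h2, ← Complex.exp_add, hw, Complex.ofReal_add]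
    congr 1; ring
  have hwb : ‖w‖ ≤ ‖κ‖ * y^2 := by
    rw [hw, norm_mul, Complex.norm_real, Real.norm_eq_abs]
    gcongr
    exact log_bound y hy0 hy1
  have hy2 : y^2 ≤ 1 := by nlinarith
  have hyq2 : y^2 ≤ q^2 := by gcongr
  have hwk : ‖w‖ ≤ ‖κ‖ := hwb.trans (mul_le_of_le_one_right (norm_nonneg _) hy2)
  have hA1 : ‖Complex.exp w - 1‖ ≤ ‖κ‖ * Real.exp ‖κ‖ * q^2 := by
    calc _ ≤ ‖w‖ * Real.exp ‖w‖ := exp_sub_one_bound w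
      _ ≤ (‖κ‖ * q^2) * Real.exp ‖κ‖ := by
        have : ‖κ‖ * y^2 ≤ ‖κ‖ * q^2 := by gcongr
        gcongr
        linarith
      _ = _ := by ring
  have hA2 : ‖Complex.exp w - 1‖ ≤ ‖κ‖ * Real.exp ‖κ‖ := by
    calc _ ≤ ‖w‖ * Real.exp ‖w‖ := exp_sub_one_bound w
      _ ≤ ‖κ‖ * Real.exp ‖κ‖ := by gcongr
  have hB : ‖(1 + z + δ) * Complex.exp (-z) - 1‖ ≤ Real.exp F * (2 * ‖b 1‖^2 + τ) := by
    have hzF : ‖z‖ ≤ F := hzb.trans hF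
    have e : (1 + z + δ) * Complex.exp (-z) - 1 =
      (Complex.exp (-z) - 1 - (-z)) + z * (Complex.exp (-z) - 1) + δ * Complex.exp (-z) := by ring
    have c1 := exp_sub_two_bound (-z)
    have c2 := exp_sub_one_bound (-z)
    rw [norm_neg] at c1 c2
    have c3 : ‖Complex.exp (-z)‖ ≤ Real.exp F := by
      refine (Complex.norm_exp_le_exp_norm _).trans ?_
      rw [norm_neg]; gcongr
    have c4 : Real.exp ‖z‖ ≤ Real.exp F := by gcongr
    rw [e]
    refine (norm_add₃_le).trans ?_
    rw [norm_mul z, norm_mul δ]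
    have d1 : ‖z‖^2 * Real.exp ‖z‖ ≤ ‖b 1‖^2 * Real.exp F := by gcongr
    have d2 : ‖z‖ * ‖Complex.exp (-z) - 1‖ ≤ ‖b 1‖^2 * Real.exp F := by
      calc _ ≤ ‖z‖ * (‖z‖ * Real.exp ‖z‖) := by gcongr
        _ = ‖z‖^2 * Real.exp ‖z‖ := by ring
        _ ≤ _ := d1
    have d3 : ‖δ‖ * ‖Complex.exp (-z)‖ ≤ τ * Real.exp F := by gcongr
    linarith
  have e : (1 - (y:ℂ)) ^ κ * (∑' r, b r * (u:ℂ)^r) * Complex.exp (-(z - κ * y)) - 1 =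
     (Complex.exp w - 1) * ((1 + z + δ) * Complex.exp (-z) - 1) + (Complex.exp w - 1)
      + ((1 + z + δ) * Complex.exp (-z) - 1) := by
    rw [hE, ← hA, show -(z - κ * y) = -z + κ * y by ring, Complex.exp_add]; ring
  rw [e]
  refine (norm_add₃_le).trans ?_
  rw [norm_mul]
  have : ‖Complex.exp w - 1‖ * ‖(1 + z + δ) * Complex.exp (-z) - 1‖ ≤
    ‖κ‖ * Real.exp ‖κ‖ * (Real.exp F * (2 * ‖b 1‖^2 + τ)) := by gcongr
  linarith

lemma R_tendsto (κ : ℂ) (b : ℕ → ℂ) (hs : Summable fun r => ‖b r‖) (p : ℕ) (hp : p.Prime) (a : ℂ) :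
    Tendsto (fun s : ℝ => (1 - (((p:ℝ)^(-1-s) : ℝ) : ℂ)) ^ κ * (∑' r, b r * (((p:ℝ)^(-s) : ℝ) : ℂ)^r) *
      Complex.exp (-(a * (((p:ℝ)^(-s) : ℝ) : ℂ)))) (nhdsWithin 0 (Set.Ioi 0))
     (nhds ((1 - (((p:ℝ)^(-1-(0:ℝ)) : ℝ) : ℂ)) ^ κ * (∑' r, b r * (((p:ℝ)^(-(0:ℝ)) : ℝ) : ℂ)^r) *
      Complex.exp (-(a * (((p:ℝ)^(-(0:ℝ)) : ℝ) : ℂ))))) := by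
  have hp0 : (0:ℝ) < p := by exact_mod_cast hp.pos
  have hp2 : (2:ℝ) ≤ p := by exact_mod_cast hp.two_le
  have c1 : Continuous fun s : ℝ => (((p:ℝ)^(-s) : ℝ) : ℂ) := by
    refine Complex.continuous_ofReal.comp ?_
    exact continuous_const.rpow continuous_neg (fun _ => Or.inl hp0.ne')
  have c2 : Continuous fun s : ℝ => (((p:ℝ)^(-1-s) : ℝ) : ℂ) := by
    refine Complex.continuous_ofReal.comp ?_
    exact continuous_const.rpow (by fun_prop) (fun _ => Or.inl hp0.ne')
  refine Tendsto.mul (Tendsto.mul ?_ ?_) ?_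
  · refine tendsto_nhdsWithin_of_tendsto_nhds ?_
    refine ContinuousAt.tendsto (f := fun s : ℝ => (1 - (((p:ℝ)^(-1-s) : ℝ) : ℂ)) ^ κ) ?_
    refine ContinuousAt.cpow (continuous_const.sub c2).continuousAt continuousAt_const ?_
    left
    have : (p:ℝ)^(-1-(0:ℝ)) < 1 := Real.rpow_lt_one_of_one_lt_of_neg (by linarith) (by norm_num)
    rw [← Complex.ofReal_one, ← Complex.ofReal_sub, Complex.ofReal_re]
    linarith
  · refine tendsto_tsum_of_dominated_convergence hs ?_ ?_
    · intro r
      exact (((c1.pow r).const_mul (b r)).tendsto 0).mono_left nhdsWithin_le_nhds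
    · filter_upwards [self_mem_nhdsWithin] with s hs0 r
      rw [norm_mul, norm_pow, Complex.norm_real, Real.norm_of_nonneg (by positivity)]
      refine mul_le_of_le_one_right (norm_nonneg _) (pow_le_one₀ (by positivity) ?_)
      exact Real.rpow_le_one_of_one_le_of_nonpos (by linarith) (by have : (0:ℝ) < s := hs0; linarith)
  · have : Continuous fun s : ℝ => Complex.exp (-(a * (((p:ℝ)^(-s) : ℝ) : ℂ))) := by fun_prop
    exact (this.tendsto 0).mono_left nhdsWithin_le_nhds
noncomputable def EF (f : ℕ → ℂ) (κ : ℂ) (s : ℝ) (p : ℕ) : ℂ :=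
  (1 - (((p:ℝ)^(-1-s) : ℝ) : ℂ)) ^ κ * (∑' r : ℕ, f (p ^ r) * (((p:ℝ)^(-s) : ℝ) : ℂ)^r)

noncomputable def RR (f : ℕ → ℂ) (κ : ℂ) (s : ℝ) (p : ℕ) : ℂ :=
  if p.Prime then EF f κ s p * Complex.exp (-(pa f κ p * (((p:ℝ)^(-s) : ℝ) : ℂ))) else 1

lemma fin_identity (f : ℕ → ℂ) (κ : ℂ) (s : ℝ) (N : ℕ) :
    ∏ p ∈ (range N).filter Nat.Prime, EF f κ s p =
      Complex.exp (∑ k ∈ range N, pa f κ k * (((k:ℝ)^(-s) : ℝ) : ℂ)) * ∏ k ∈ range N, RR f κ s k := by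
  rw [Complex.exp_sum, ← Finset.prod_mul_distrib, Finset.prod_filter]
  apply Finset.prod_congr rfl
  intro k _
  unfold RR
  split_ifs with h
  · rw [mul_comm, mul_assoc, ← Complex.exp_add, neg_add_cancel, Complex.exp_zero, mul_one]
  · unfold pa; rw [if_neg h]; simp

lemma RR_bound (f : ℕ → ℂ) (κ : ℂ) (hf1 : f 1 = 1)
    (hs : ∀ p : ℕ, p.Prime → Summable (fun r : ℕ => ‖f (p ^ (r + 1))‖))
    (hτ : Summable (fun p : Nat.Primes => ∑' r : ℕ, ‖f ((p:ℕ) ^ (r + 2))‖))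
    (hsq : Summable (fun p : Nat.Primes => ‖f (p:ℕ)‖^2)) :
    ∃ B : ℕ → ℝ, Summable B ∧ ∀ s : ℝ, 0 ≤ s → ∀ n, ‖RR f κ s n - 1‖ ≤ B n := by
  set F := (∑' p : Nat.Primes, ‖f (p:ℕ)‖^2) + 1 with hF
  have hFb : ∀ p : ℕ, p.Prime → ‖f p‖ ≤ F := by
    intro p hp
    have := hsq.le_tsum ⟨p, hp⟩ (fun _ _ => by positivity)
    simp only at this
    nlinarith [sq_nonneg (‖f p‖ - 1)]
  set h : ℕ → ℝ := fun p => (‖κ‖ * Real.exp ‖κ‖ + 1) * (Real.exp F * (2 * ‖f p‖^2 + ∑' r, ‖f (p ^ (r+2))‖))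
      + ‖κ‖ * Real.exp ‖κ‖ * (1 / (p:ℝ))^2 with hh
  have hsumm : Summable (fun p : Nat.Primes => h p) := by
    refine Summable.add (((hsq.mul_left 2).add hτ).mul_left _ |>.mul_left _) (Summable.mul_left _ ?_)
    have := (Real.summable_one_div_nat_pow (p := 2)).2 (by norm_num)
    refine (this.subtype {p | Nat.Prime p}).congr ?_
    intro p
    simp
  refine ⟨Set.indicator {p | Nat.Prime p} h, summable_subtype_iff_indicator.1 hsumm, ?_⟩
  intro s hs0 n
  by_cases hn : n.Prime
  · rw [Set.indicator_of_mem (show n ∈ {p | Nat.Prime p} from hn)]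
    have hn0 : (0:ℝ) < n := by exact_mod_cast hn.pos
    have hn2 : (2:ℝ) ≤ n := by exact_mod_cast hn.two_le
    have hye : (n:ℝ)^(-1-s) = (n:ℝ)^(-s) / n := by
      rw [sub_eq_add_neg, Real.rpow_add hn0, Real.rpow_neg_one]; ring
    have hu1 : (n:ℝ)^(-s) ≤ 1 := Real.rpow_le_one_of_one_le_of_nonpos (by linarith) (by linarith)
    have hyq : (n:ℝ)^(-1-s) ≤ 1 / n := by rw [hye]; gcongr
    have hq : 1 / (n:ℝ) ≤ 1/2 := by gcongr
    have := R_bound κ F (fun r => f (n ^ r)) (by simp [hf1]) (by simpa using hFb n hn)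
      ((summable_nat_add_iff 1).1 (hs n hn)) ((n:ℝ)^(-s)) ((n:ℝ)^(-1-s)) (1 / n) (by positivity) hu1 (by positivity)
      (hyq.trans hq) hyq
    simp only [pow_one] at this
    unfold RR EF pa
    rw [if_pos hn, if_pos hn]
    rw [hh]
    refine le_trans (le_of_eq ?_) this
    congr 5
    rw [hye, Complex.ofReal_div, Complex.ofReal_natCast]; ring
  · rw [Set.indicator_of_notMem (show n ∉ {p | Nat.Prime p} from hn)]
    unfold RR
    rw [if_neg hn]; simp

lemma RR_tendsto (f : ℕ → ℂ) (κ : ℂ)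
    (hs : ∀ p : ℕ, p.Prime → Summable (fun r : ℕ => ‖f (p ^ (r + 1))‖)) (n : ℕ) :
    Tendsto (fun s : ℝ => RR f κ s n) (nhdsWithin 0 (Set.Ioi 0)) (nhds (RR f κ 0 n)) := by
  by_cases hn : n.Prime
  · unfold RR EF
    simp only [hn, if_true]
    exact R_tendsto κ (fun r => f (n^r)) ((summable_nat_add_iff 1).1 (hs n hn)) n hn (pa f κ n)
  · unfold RR
    simp only [hn, if_false]
    exact tendsto_const_nhds

lemma RR_prod (f : ℕ → ℂ) (κ : ℂ) (B : ℕ → ℝ) (hB : Summable B) (s : ℝ) (h : ∀ n, ‖RR f κ s n - 1‖ ≤ B n) :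
    Tendsto (fun N : ℕ => ∏ k ∈ range N, RR f κ s k) atTop (nhds (∏' k, RR f κ s k)) := by
  have h1 : Summable fun n => ‖RR f κ s n - 1‖ := Summable.of_nonneg_of_le (fun _ => norm_nonneg _) h hB
  have h2 := multipliable_one_add_of_summable h1
  simp only [add_sub_cancel] at h2
  exact h2.hasProd.tendsto_prod_nat

lemma prod_cpow (y : ℕ → ℝ) (κ : ℂ) (S : Finset ℕ) (hy : ∀ p ∈ S, 0 ≤ 1 - y p) :
    ∏ p ∈ S, (1 - (y p : ℂ)) ^ κ = ((∏ p ∈ S, (1 - y p) : ℝ) : ℂ) ^ κ := by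
  induction S using Finset.induction_on with
  | empty => simp
  | insert a S ha ih =>
    rw [Finset.prod_insert ha, Finset.prod_insert ha, ih (fun p hp => hy p (mem_insert_of_mem hp)),
      Complex.ofReal_mul, Complex.mul_cpow_ofReal_nonneg (hy a (mem_insert_self _ _))
        (Finset.prod_nonneg fun p hp => hy p (mem_insert_of_mem hp))]
    push_cast; rfl

noncomputable def ZZ (s : ℝ) : ℝ := ∑' n : ℕ, 1 / (n:ℝ)^(1+s)

lemma ZZ_pos (s : ℝ) (hs : 0 < s) : 0 < ZZ s := by
  have h : Summable fun n : ℕ => 1 / (n:ℝ)^(1+s) := Real.summable_one_div_nat_rpow.2 (by linarith)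
  have := h.le_tsum 1 (fun _ _ => by positivity)
  simp at this
  unfold ZZ
  simp only [one_div]
  linarith

lemma ZZ_prod (s : ℝ) (hs : 0 < s) :
    Tendsto (fun N : ℕ => ∏ p ∈ (range N).filter Nat.Prime, (1 - (p:ℝ)^(-1-s))) atTop (nhds (ZZ s)⁻¹) := by
  let φ : ℕ →*₀ ℝ :=
    { toFun := fun n => (n:ℝ)^(-1-s)
      map_zero' := by simp only [Nat.cast_zero]; exact Real.zero_rpow (by linarith)
      map_one' := by simp
      map_mul' := fun m n => by
        push_cast; exact Real.mul_rpow (by positivity) (by positivity) }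
  have hsum : Summable (fun n : ℕ => ‖φ n‖) := by
    have : Summable fun n : ℕ => (n:ℝ) ^ (-1-s) := Real.summable_nat_rpow.2 (by linarith)
    refine this.congr fun n => ?_
    exact (Real.norm_of_nonneg (by positivity)).symm
  have h := EulerProduct.eulerProduct_completely_multiplicative hsum
  have e : ∑' n : ℕ, φ n = ZZ s := by
    unfold ZZ
    refine tsum_congr fun n => ?_
    change (n:ℝ)^(-1-s) = _
    rw [show -1 - s = -(1+s) by ring, Real.rpow_neg (by positivity), one_div]
  rw [e] at h
  have h2 := h.inv₀ (ZZ_pos s hs).ne'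
  refine h2.congr fun N => ?_
  rw [Finset.prod_inv_distrib, inv_inv]; rfl

lemma ZZ_lim : Tendsto (fun s : ℝ => s * ZZ s) (nhdsWithin 0 (Set.Ioi 0)) (nhds 1) := by
  have h := tendsto_sub_mul_tsum_nat_rpow
  have h2 : Tendsto (fun s : ℝ => 1 + s) (nhdsWithin 0 (Set.Ioi 0)) (nhdsWithin 1 (Set.Ioi 1)) := by
    refine tendsto_nhdsWithin_iff.2 ⟨?_, ?_⟩
    · have : Continuous fun s : ℝ => 1 + s := by fun_prop
      simpa using (this.tendsto 0).mono_left nhdsWithin_le_nhds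
    · filter_upwards [self_mem_nhdsWithin] with s hs
      have : (0:ℝ) < s := hs
      simpa using this
  refine (h.comp h2).congr fun s => ?_
  simp [ZZ]

lemma D_identity (f : ℕ → ℂ) (κ : ℂ) (hf0 : f 0 = 0) (hf1 : f 1 = 1)
    (hmul : ∀ m n : ℕ, Nat.Coprime m n → f (m * n) = f m * f n)
    (hsum : ∀ s : ℝ, 0 < s → Summable fun n : ℕ => ‖f n‖ * (n:ℝ)^(-s))
    (B : ℕ → ℝ) (hB : Summable B) (hRB : ∀ s : ℝ, 0 ≤ s → ∀ n, ‖RR f κ s n - 1‖ ≤ B n) (s : ℝ) (hs : 0 < s) :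
    (((ZZ s)⁻¹ : ℝ) : ℂ) ^ κ * ∑' n : ℕ, f n * (((n:ℝ)^(-s) : ℝ) : ℂ) =
      Complex.exp (∑' n : ℕ, pa f κ n * (((n:ℝ)^(-s) : ℝ) : ℂ)) * ∏' k, RR f κ s k := by
  set φ : ℕ → ℂ := fun n => f n * (((n:ℝ)^(-s) : ℝ) : ℂ) with hφ
  have hφs : Summable (fun n => ‖φ n‖) := by
    refine (hsum s hs).congr fun n => ?_
    rw [hφ]; simp only
    rw [norm_mul, Complex.norm_real, Real.norm_of_nonneg (by positivity)]
  have h1 := EulerProduct.eulerProduct (f := φ) (by simp [hφ, hf1])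
    (by
      intro m n h
      simp only [hφ]
      rw [hmul m n h, Nat.cast_mul, Real.mul_rpow (by positivity) (by positivity), Complex.ofReal_mul]; ring)
    hφs (by simp [hφ, hf0])
  have h2 := ZZ_prod s hs
  have h3 : Tendsto (fun N : ℕ => ((∏ p ∈ (range N).filter Nat.Prime, (1 - (p:ℝ)^(-1-s)) : ℝ) : ℂ) ^ κ) atTop
      (nhds ((((ZZ s)⁻¹ : ℝ) : ℂ) ^ κ)) := by
    refine Tendsto.cpow ((Complex.continuous_ofReal.tendsto _).comp h2) tendsto_const_nhds ?_
    left
    rw [Complex.ofReal_re]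
    exact inv_pos.2 (ZZ_pos s hs)
  have h4 := h3.mul h1
  have h5 : Summable fun n : ℕ => pa f κ n * (((n:ℝ)^(-s) : ℝ) : ℂ) := by
    refine Summable.of_norm_bounded (pa_summable f κ hsum s hs) fun n => ?_
    rw [norm_mul, Complex.norm_real, Real.norm_of_nonneg (by positivity)]
  have h6 := ((Complex.continuous_exp.tendsto _).comp h5.hasSum.tendsto_sum_nat).mul (RR_prod f κ B hB s (hRB s hs.le))
  refine tendsto_nhds_unique h4 (h6.congr fun N => ?_)
  simp only [Function.comp]
  rw [← fin_identity]
  unfold EF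
  rw [Finset.prod_mul_distrib, prod_cpow (fun p => (p:ℝ)^(-1-s))]
  · congr 1
    apply Finset.prod_congr rfl
    intro p hp
    refine tsum_congr fun r => ?_
    simp only [hφ]
    congr 1
    rw [← Complex.ofReal_pow, Nat.cast_pow, ← Real.rpow_natCast, ← Real.rpow_natCast, ← Real.rpow_mul (by positivity), ← Real.rpow_mul (by positivity), mul_comm]
  · intro p hp
    have hp' := (mem_filter.1 hp).2
    have : (p:ℝ)^(-1-s) ≤ 1 := Real.rpow_le_one_of_one_le_of_nonpos (by exact_mod_cast hp'.one_le) (by linarith)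
    linarith

lemma euler_limit (f : ℕ → ℂ) (κ : ℂ) (hf0 : f 0 = 0) (hf1 : f 1 = 1)
    (hmul : ∀ m n : ℕ, Nat.Coprime m n → f (m * n) = f m * f n)
    (hs : ∀ p : ℕ, p.Prime → Summable (fun r : ℕ => ‖f (p ^ (r + 1))‖))
    (hτ : Summable (fun p : Nat.Primes => ∑' r : ℕ, ‖f ((p:ℕ) ^ (r + 2))‖))
    (hsq : Summable (fun p : Nat.Primes => ‖f (p:ℕ)‖^2))
    (hsum : ∀ s : ℝ, 0 < s → Summable fun n : ℕ => ‖f n‖ * (n:ℝ)^(-s)) (G : ℂ)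
    (hG1 : Tendsto (fun N : ℕ => ∑ k ∈ range N, pa f κ k) atTop (nhds G))
    (hG2 : Tendsto (fun s : ℝ => ∑' n : ℕ, pa f κ n * (((n:ℝ)^(-s) : ℝ) : ℂ)) (nhdsWithin 0 (Set.Ioi 0)) (nhds G)) :
    ∃ P : ℂ, Tendsto (fun N : ℕ => ∏ p ∈ (range N).filter Nat.Prime, EF f κ 0 p) atTop (nhds P) ∧
      Tendsto (fun s : ℝ => (s:ℂ)^κ * ∑' n : ℕ, f n * (((n:ℝ)^(-s) : ℝ) : ℂ)) (nhdsWithin 0 (Set.Ioi 0)) (nhds P) := by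
  obtain ⟨B, hB, hRB⟩ := RR_bound f κ hf1 hs hτ hsq
  refine ⟨Complex.exp G * ∏' k, RR f κ 0 k, ?_, ?_⟩
  · have := ((Complex.continuous_exp.tendsto _).comp hG1).mul (RR_prod f κ B hB 0 (hRB 0 le_rfl))
    refine this.congr fun N => ?_
    rw [fin_identity]
    simp
  · have h1 : Tendsto (fun s : ℝ => ∏' k, RR f κ s k) (nhdsWithin 0 (Set.Ioi 0)) (nhds (∏' k, RR f κ 0 k)) := by
      have := tendsto_tprod_one_add_of_dominated_convergence (𝓕 := nhdsWithin (0:ℝ) (Set.Ioi 0))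
        (f := fun s k => RR f κ s k - 1) (g := fun k => RR f κ 0 k - 1) hB
        (fun k => (RR_tendsto f κ hs k).sub_const 1)
        (by filter_upwards [self_mem_nhdsWithin] with s hs0 k; exact hRB s (le_of_lt hs0) k)
      simpa only [add_sub_cancel] using this
    have h2 : Tendsto (fun s : ℝ => ((s * ZZ s : ℝ) : ℂ) ^ κ) (nhdsWithin 0 (Set.Ioi 0)) (nhds 1) := by
      have : Tendsto (fun s : ℝ => ((s * ZZ s : ℝ) : ℂ) ^ κ) (nhdsWithin 0 (Set.Ioi 0)) (nhds (((1:ℝ):ℂ) ^ κ)) := by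
        refine Tendsto.cpow ((Complex.continuous_ofReal.tendsto _).comp ZZ_lim) tendsto_const_nhds ?_
        left; simp
      simpa using this
    have h3 := h2.mul (((Complex.continuous_exp.tendsto _).comp hG2).mul h1)
    rw [one_mul] at h3
    refine h3.congr' ?_
    filter_upwards [self_mem_nhdsWithin] with s hs0
    have hs0' : (0:ℝ) < s := hs0
    have hz := ZZ_pos s hs0'
    simp only [Function.comp]
    rw [← D_identity f κ hf0 hf1 hmul hsum B hB hRB s hs0', ← mul_assoc,
      ← Complex.mul_cpow_ofReal_nonneg (by positivity) (by positivity), ← Complex.ofReal_mul]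
    congr 3
    field_simp

theorem stmt0 (g : ℕ → ℂ) (κ : ℂ) (β : ℝ) (hg : IsMult g)
    (hκ : κ.im ^ 2 < 2 * κ.re + 1)
    (hA : CondA g κ) (hB : CondB g)
    (hβ0 : 0 ≤ β) (hβ : β < κ.re + 1) (hC : CondC g β) :
    ∃ P : ℂ,
      Tendsto (fun N : ℕ => ∏ p ∈ (Finset.range N).filter Nat.Prime, eulerFactor g κ p)
        atTop (nhds P) ∧
      ∃ C : ℝ, ∀ x : ℝ, 2 ≤ x →
        ‖Mg g x - (Complex.Gamma (κ + 1))⁻¹ * P * ((Real.log x : ℂ) ^ κ)‖ ≤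
          C * Real.log x ^ (β - 1) := by
  have hl2 : 0 < Real.log 2 := Real.log_pos (by norm_num)
  set f : ℕ → ℂ := fun n => g n / (n:ℂ) with hf
  have hf0 : f 0 = 0 := by simp [hf]
  have hf1 : f 1 = 1 := by simp [hf, hg.1]
  have hmul : ∀ m n : ℕ, Nat.Coprime m n → f (m * n) = f m * f n := by
    intro m n h
    simp only [hf]
    rw [hg.2 m n h, Nat.cast_mul, mul_div_mul_comm]
  have hs : ∀ p : ℕ, p.Prime → Summable (fun r : ℕ => ‖f (p ^ (r + 1))‖) :=
    fun p hp => condB_b g hB ⟨p, hp⟩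
  have hτ : Summable (fun p : Nat.Primes => ∑' r : ℕ, ‖f ((p:ℕ) ^ (r + 2))‖) := condB_tau g hB
  have hsq : Summable (fun p : Nat.Primes => ‖f (p:ℕ)‖^2) := condB_sq g hB
  obtain ⟨K2, h2⟩ := condB_d g hB
  have h3 : ∀ N : ℕ, ∑ p ∈ (Icc 1 N).filter Nat.Prime, ‖f p‖ * Real.log p * ∑' r : ℕ, ‖f (p ^ (r + 1))‖ ≤
      ∑' p : Nat.Primes, ‖f (p:ℕ)‖ * Real.log (p:ℕ) * ∑' r : ℕ, ‖f ((p:ℕ) ^ (r + 1))‖ := by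
    intro N
    exact sum_primes_le (fun p => ‖f p‖ * Real.log p * ∑' r : ℕ, ‖f (p ^ (r + 1))‖)
      (fun n => mul_nonneg (mul_nonneg (norm_nonneg _) (Real.log_natCast_nonneg _)) (tsum_nonneg fun _ => norm_nonneg _))
      (condB_c g hB) (Icc 1 N)
  obtain ⟨CA, hCA⟩ := condA_ext g κ hA
  obtain ⟨CC, hCC⟩ := hC
  have hS : ∀ t : ℝ, Real.log 2 ≤ t → ∑ n ∈ Icc 1 ⌊Real.exp t⌋₊, ‖f n‖ ≤
      Real.exp (∑' p : Nat.Primes, ∑' r : ℕ, ‖f ((p:ℕ) ^ (r + 2))‖) * CC * t ^ β := by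
    intro t ht
    have e2 : 2 ≤ Real.exp t := by
      rw [← Real.exp_log (show (0:ℝ) < 2 by norm_num)]; exact Real.exp_le_exp.2 ht
    refine (sum_norm_le f hf1 hmul hs _ (fun s => sum_primes_le (fun p => ∑' r : ℕ, ‖f (p ^ (r + 2))‖)
      (fun n => tsum_nonneg fun _ => norm_nonneg _) hτ s) _).trans ?_
    have := hCC (Real.exp t) e2
    rw [Real.log_exp] at this
    rw [mul_assoc]
    refine mul_le_mul_of_nonneg_left (le_trans (le_of_eq ?_) this) (Real.exp_pos _).le
    refine Finset.prod_congr rfl fun p _ => ?_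
    simp only [hf]
    rw [norm_div, Complex.norm_natCast]
  have hsum := summable_rpow f _ β hS
  obtain ⟨G, hG1, hG2⟩ := prime_laplace f κ CA hCA hsum
  obtain ⟨P, hP1, hP2⟩ := euler_limit f κ hf0 hf1 hmul hs hτ hsq hsum G hG1 hG2
  obtain ⟨c, C', hc⟩ := ode_main f κ β _ hβ (conv_main f κ hmul hs K2 _ CA _ β h2 h3 hCA hS)
  have hξ : -1 < κ.re := by nlinarith [sq_nonneg κ.im]
  have hlap : Tendsto (fun s : ℝ => (s:ℂ)^κ * ∑' n : ℕ, f n * (((n:ℝ)^(-s) : ℝ) : ℂ))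
      (nhdsWithin 0 (Set.Ioi 0)) (nhds (c * Complex.Gamma (κ+1))) := by
    set β' := (β + (κ.re + 1)) / 2 with hβ'
    have hC'0 : 0 ≤ C' := by
      have := (norm_nonneg _).trans (hc (Real.log 2) le_rfl)
      by_contra hneg
      have := mul_neg_of_neg_of_pos (not_le.1 hneg) (Real.rpow_pos_of_pos hl2 (β - 1))
      linarith
    refine laplace_limit f hf0 κ c β' (C' * Real.log 2 ^ (β - β')) hξ (by linarith) (by linarith) hsum ?_
    intro t ht
    refine (hc t ht).trans ?_
    have ht0 : 0 < t := hl2.trans_le ht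
    have e : t ^ (β - 1) = t ^ (β - β') * t ^ (β' - 1) := by
      rw [← Real.rpow_add ht0]; congr 1; ring
    rw [e, mul_assoc]
    have : t ^ (β - β') ≤ Real.log 2 ^ (β - β') := Real.rpow_le_rpow_of_nonpos hl2 ht (by linarith)
    gcongr
  have hΓ : Complex.Gamma (κ + 1) ≠ 0 := Complex.Gamma_ne_zero_of_re_pos (by simp; linarith)
  have hcP : c * Complex.Gamma (κ+1) = P := tendsto_nhds_unique hlap hP2
  refine ⟨P, ?_, C', ?_⟩
  · refine hP1.congr fun N => ?_
    refine Finset.prod_congr rfl fun p _ => ?_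
    unfold EF eulerFactor
    congr 1
    · rw [sub_zero, Real.rpow_neg_one, Complex.ofReal_inv, Complex.ofReal_natCast, one_div]
    · refine tsum_congr fun r => ?_
      simp [hf]
  · intro x hx
    have := hc (Real.log x) (Real.log_le_log (by norm_num) hx)
    have e : (Complex.Gamma (κ + 1))⁻¹ * P = c := by
      rw [← hcP]; field_simp
    rw [e]
    unfold odeM at this
    rw [Real.exp_log (by linarith)] at this
    exact this
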